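/- arXiv:1010.4158 — 7 statements merged into one kernel-verified Lean document; each statement's English description precedes it below -/
import Mathlib

section
/- Let m:ℝ²→ℂ be measurable and locally bounded. For i=1,2 suppose the exponents satisfy either 1<p_i,q_i<∞ or (p_i=1 and q_i=∞), let 0<p₃,q₃<∞, and define p by 1/p=1/p₁+1/p₂−1/p₃. If there is a constant C>0 such that ‖D_{m̃_{t,p}}(a,b)‖_{ℓ^{p₃,q₃}(ℤ)} ≤ C‖a‖_{ℓ^{p₁,q₁}(ℤ)}‖b‖_{ℓ^{p₂,q₂}(ℤ)} for every t>0 and all finitely supported sequences a,b, then there is a constant C'>0, depending only on C and the exponents, such that ‖C_m(f,g)‖_{L^{p₃,q₃}(ℝ)} ≤ C'‖f‖_{L^{p₁,q₁}(ℝ)}‖g‖_{L^{p₂,q₂}(ℝ)} for all Schwartz functions f,g with compactly supported Fourier transform. -/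
open MeasureTheory Complex SchwartzMap Filter
open scoped FourierTransform ENNReal NNReal Real

/-- The distribution function of an `ℝ≥0∞`-valued function. -/
noncomputable def distFn {X : Type*} [MeasurableSpace X] (μ : Measure X)
    (f : X → ℝ≥0∞) (t : ℝ) : ℝ≥0∞ :=
  μ {x | ENNReal.ofReal t < f x}

/-- The Lorentz `L^{p,q}` quasinorm, defined via the distribution function. -/
noncomputable def lorentzNorm {X : Type*} [MeasurableSpace X] (μ : Measure X)
    (p q : ℝ≥0∞) (f : X → ℝ≥0∞) : ℝ≥0∞ :=
  if q = ∞ then ⨆ t ∈ Set.Ioi (0 : ℝ), ENNReal.ofReal t * distFn μ f t ^ (1 / p.toReal)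
  else (q * ∫⁻ t in Set.Ioi (0 : ℝ),
      ENNReal.ofReal (t ^ (q.toReal - 1)) * distFn μ f t ^ (q.toReal / p.toReal)) ^ (1 / q.toReal)

/-- The Lorentz `L^{p,q}` quasinorm of a complex-valued function. -/
noncomputable def lorentzNormC {X : Type*} [MeasurableSpace X] (μ : Measure X)
    (p q : ℝ≥0∞) (f : X → ℂ) : ℝ≥0∞ :=
  lorentzNorm μ p q fun x => (‖f x‖₊ : ℝ≥0∞)

/-- A function is locally bounded if it is bounded on every compact set. -/
def LocallyBounded (m : ℝ × ℝ → ℂ) : Prop :=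
  ∀ K : Set (ℝ × ℝ), IsCompact K → ∃ C : ℝ, ∀ z ∈ K, ‖m z‖ ≤ C

/-- The bilinear multiplier operator `C_m`. -/
noncomputable def Cm (m : ℝ × ℝ → ℂ) (f g : 𝓢(ℝ, ℂ)) (x : ℝ) : ℂ :=
  ∫ ξ : ℝ, ∫ η : ℝ, 𝓕 (f : ℝ → ℂ) ξ * 𝓕 (g : ℝ → ℂ) η * m (ξ, η) *
    Complex.exp (2 * Real.pi * Complex.I * (x : ℂ) * ((ξ : ℂ) + (η : ℂ)))

/-- The trigonometric polynomial with coefficients `a`. -/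
noncomputable def trigP (a : ℤ → ℂ) (ξ : ℝ) : ℂ :=
  ∑ᶠ k : ℤ, a k * Complex.exp (-(2 * Real.pi) * Complex.I * (k : ℂ) * (ξ : ℂ))

/-- The discrete bilinear operator `D_{m̃_{t,p}}`. -/
noncomputable def Dop (m : ℝ × ℝ → ℂ) (t p : ℝ) (a b : ℤ → ℂ) (n : ℤ) : ℂ :=
  ((t ^ (1 / p) : ℝ) : ℂ) *
    ∫ ξ in Set.Icc (-(1/2) : ℝ) (1/2), ∫ η in Set.Icc (-(1/2) : ℝ) (1/2),
      trigP a ξ * trigP b η * m (t * ξ, t * η) *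
        Complex.exp (2 * Real.pi * Complex.I * (n : ℂ) * ((ξ : ℂ) + (η : ℂ)))

/-- `InER R f` : `f` is (a representative of) a tempered distribution of exponential type,
i.e. a continuous function of polynomial growth whose distributional Fourier transform is
supported in `[-R, R]`. -/
def InER (R : ℝ) (f : ℝ → ℂ) : Prop :=
  Continuous f ∧ (∃ (C : ℝ) (k : ℕ), ∀ x : ℝ, ‖f x‖ ≤ C * (1 + |x|) ^ k) ∧
  ∀ φ : 𝓢(ℝ, ℂ), Disjoint (tsupport (φ : ℝ → ℂ)) (Set.Icc (-R) R) →
    ∫ x : ℝ, f x * 𝓕 (φ : ℝ → ℂ) x = 0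

/-- The discrete bilinear Hilbert transform. -/
noncomputable def bhtZ (α : ℤ) (a b : ℤ → ℂ) (n : ℤ) : ℂ :=
  ((Real.pi : ℂ))⁻¹ * ∑ᶠ (k : ℤ) (_ : k ≠ 0), a (n - k) * b (n - α * k) * (k : ℂ)⁻¹

/-- `sinc x = sin (π x) / (π x)`, with `sinc 0 = 1`. -/
noncomputable def mySinc (x : ℝ) : ℝ :=
  if x = 0 then 1 else Real.sin (Real.pi * x) / (Real.pi * x)


lemma lor_mono {X : Type*} [MeasurableSpace X] (μ : Measure X) (p q : ℝ≥0∞)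
    {u v : X → ℝ≥0∞} (h : ∀ x, u x ≤ v x) : lorentzNorm μ p q u ≤ lorentzNorm μ p q v := by
  have hd : ∀ t, distFn μ u t ≤ distFn μ v t := fun t =>
    measure_mono fun x hx => lt_of_lt_of_le hx (h x)
  unfold lorentzNorm
  split_ifs
  · gcongr with t ht
    exact hd t
  · gcongr with t
    exact hd t

lemma lint_scale (c : ℝ) (hc : 0 < c) (h : ℝ → ℝ≥0∞) :
    ∫⁻ t in Set.Ioi (0 : ℝ), h t = ∫⁻ t in Set.Ioi (0 : ℝ), ENNReal.ofReal c * h (c * t) := by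
  have := lintegral_image_eq_lintegral_abs_deriv_mul (s := Set.Ioi (0:ℝ)) (f := fun t => c * t)
    (f' := fun _ => c) measurableSet_Ioi
    (fun x _ => by simpa using ((hasDerivAt_id x).const_mul c).hasDerivWithinAt)
    (fun a _ b _ hab => by simpa [hc.ne'] using hab) h
  rw [abs_of_pos hc] at this
  rw [← this]
  congr 2
  ext x
  constructor
  · intro hx
    exact ⟨x / c, div_pos hx hc, by field_simp⟩
  · rintro ⟨y, hy, rfl⟩
    exact mul_pos hc hy

lemma distFn_smul {X : Type*} [MeasurableSpace X] (μ : Measure X) (c : ℝ) (hc : 0 < c)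
    (u : X → ℝ≥0∞) (t : ℝ) :
    distFn μ (fun x => ENNReal.ofReal c * u x) (c * t) = distFn μ u t := by
  unfold distFn
  congr 1
  ext x
  simp only [Set.mem_ofPred_eq]
  rw [ENNReal.ofReal_mul hc.le]
  exact ENNReal.mul_lt_mul_iff_right (by simpa using hc) ENNReal.ofReal_ne_top

lemma lor_smul {X : Type*} [MeasurableSpace X] (μ : Measure X) (p q : ℝ≥0∞) (hq : q ≠ 0)
    (c : ℝ) (hc : 0 < c) (u : X → ℝ≥0∞) :
    lorentzNorm μ p q (fun x => ENNReal.ofReal c * u x)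
      = ENNReal.ofReal c * lorentzNorm μ p q u := by
  unfold lorentzNorm
  split_ifs with h
  · simp only [ENNReal.mul_iSup]
    apply le_antisymm
    · refine iSup₂_le fun t ht => ?_
      refine le_iSup₂_of_le (t / c) (div_pos ht hc) ?_
      have := distFn_smul μ c hc u (t / c)
      rw [mul_div_cancel₀ _ hc.ne'] at this
      rw [this, ← mul_assoc, ← ENNReal.ofReal_mul hc.le, mul_div_cancel₀ _ hc.ne']
    · refine iSup₂_le fun t ht => ?_
      refine le_iSup₂_of_le (c * t) (mul_pos hc ht) ?_
      rw [distFn_smul μ c hc, ← mul_assoc, ← ENNReal.ofReal_mul hc.le]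
  · have hq' : 0 < q.toReal := ENNReal.toReal_pos hq h
    rw [lint_scale c hc]
    have : ∀ t ∈ Set.Ioi (0:ℝ), ENNReal.ofReal c * (ENNReal.ofReal ((c * t) ^ (q.toReal - 1)) *
        distFn μ (fun x => ENNReal.ofReal c * u x) (c * t) ^ (q.toReal / p.toReal))
        = ENNReal.ofReal c ^ q.toReal * (ENNReal.ofReal (t ^ (q.toReal - 1)) *
        distFn μ u t ^ (q.toReal / p.toReal)) := by
      intro t ht
      rw [distFn_smul μ c hc, Real.mul_rpow hc.le (le_of_lt ht), ENNReal.ofReal_mul (by positivity),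
        ENNReal.ofReal_rpow_of_pos hc, ← mul_assoc, ← mul_assoc, ← mul_assoc,
        ← ENNReal.ofReal_mul hc.le]
      congr 3
      rw [Real.rpow_sub_one hc.ne']
      field_simp
    rw [setLIntegral_congr_fun measurableSet_Ioi this, lintegral_const_mul' _ _ (by
      simp [hq'.le]), mul_left_comm, ENNReal.mul_rpow_of_nonneg _ _ (by positivity),
      ← ENNReal.rpow_mul, mul_one_div_cancel hq'.ne', ENNReal.rpow_one]

lemma distFn_anti {X : Type*} [MeasurableSpace X] (μ : Measure X) (u : X → ℝ≥0∞) :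
    Antitone (distFn μ u) := fun s t hst => measure_mono fun x hx =>
      lt_of_le_of_lt (ENNReal.ofReal_le_ofReal hst) hx

lemma lor_integrand_meas {X : Type*} [MeasurableSpace X] (μ : Measure X) (u : X → ℝ≥0∞)
    (a b : ℝ) :
    Measurable fun t : ℝ => ENNReal.ofReal (t ^ a) * distFn μ u t ^ b := by
  have := (distFn_anti μ u).measurable
  fun_prop

lemma distFn_add {X : Type*} [MeasurableSpace X] (μ : Measure X) (u v : X → ℝ≥0∞) (t : ℝ) :
    distFn μ (fun x => u x + v x) t ≤
      distFn μ (fun x => ENNReal.ofReal 2 * u x) t + distFn μ (fun x => ENNReal.ofReal 2 * v x) t := by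
  refine le_trans (measure_mono ?_) (measure_union_le _ _)
  intro x hx
  simp only [Set.mem_ofPred_eq, Set.mem_union] at hx ⊢
  simp only [ENNReal.ofReal_ofNat, two_mul]
  rcases le_total (u x) (v x) with h | h
  · right; exact hx.trans_le (by gcongr)
  · left; exact hx.trans_le (by gcongr)

lemma lor_add (p q : ℝ≥0∞)
    (h₁ : (1 < p ∧ p < ∞ ∧ 1 < q ∧ q < ∞) ∨ (p = 1 ∧ q = ∞)) :
    ∃ K : ℝ≥0∞, K ≠ ∞ ∧ ∀ {X : Type} [MeasurableSpace X] (μ : Measure X) (u v : X → ℝ≥0∞),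
      lorentzNorm μ p q (fun x => u x + v x) ≤
        K * (lorentzNorm μ p q u + lorentzNorm μ p q v) := by
  rcases h₁ with ⟨hp, hp', hq, hq'⟩ | ⟨rfl, rfl⟩
  · have hpr : 1 < p.toReal := by
      rw [← ENNReal.toReal_one]; exact (ENNReal.toReal_lt_toReal (by simp) hp'.ne).2 hp
    have hqr : 1 < q.toReal := by
      rw [← ENNReal.toReal_one]; exact (ENNReal.toReal_lt_toReal (by simp) hq'.ne).2 hq
    set r := q.toReal / p.toReal with hr
    have hr0 : 0 < r := by positivity
    have hq0 : q ≠ 0 := (zero_lt_one.trans hq).ne'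
    refine ⟨((2:ℝ≥0∞) ^ r) ^ (1 / q.toReal) * ENNReal.ofReal 2, ?_, ?_⟩
    · refine ENNReal.mul_ne_top (ENNReal.rpow_ne_top_of_nonneg (by positivity) ?_) (by simp)
      exact ENNReal.rpow_ne_top_of_nonneg hr0.le (by simp)
    intro X _ μ u v
    have key : ∀ x y : ℝ≥0∞, (x + y) ^ r ≤ 2 ^ r * (x ^ r + y ^ r) := by
      intro x y
      rw [mul_add, ← ENNReal.mul_rpow_of_nonneg _ _ hr0.le, ← ENNReal.mul_rpow_of_nonneg _ _ hr0.le]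
      rcases le_total x y with h | h
      · refine le_trans ?_ le_add_self
        gcongr; rw [two_mul]; gcongr
      · refine le_trans ?_ le_self_add
        gcongr; rw [two_mul]; gcongr
    rw [mul_assoc, mul_add, ← lor_smul μ p q hq0 2 two_pos, ← lor_smul μ p q hq0 2 two_pos]
    unfold lorentzNorm
    simp only [hq'.ne, if_false]
    rw [← hr]
    refine le_trans ?_ (mul_le_mul_right (ENNReal.rpow_add_le_add_rpow _ _ (by positivity) (by
      rw [div_le_one (by positivity)]; exact hqr.le)) _)
    rw [← ENNReal.mul_rpow_of_nonneg _ _ (by positivity), ← mul_add, mul_left_comm,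
      ← lintegral_add_left (lor_integrand_meas _ _ _ _), ← lintegral_const_mul' _ _ (show (2:ℝ≥0∞) ^ r ≠ ∞ from
        ENNReal.rpow_ne_top_of_nonneg hr0.le (by simp))]
    refine ENNReal.rpow_le_rpow (mul_le_mul_right (lintegral_mono fun t => ?_) _) (by positivity)
    dsimp only
    rw [← mul_add, mul_left_comm]
    gcongr
    exact (ENNReal.rpow_le_rpow (distFn_add μ u v t) hr0.le).trans (key _ _)
  · refine ⟨ENNReal.ofReal 2, by simp, ?_⟩
    intro X _ μ u v
    rw [mul_add, ← lor_smul μ 1 ∞ (by simp) 2 two_pos, ← lor_smul μ 1 ∞ (by simp) 2 two_pos]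
    unfold lorentzNorm
    simp only [if_true, ENNReal.toReal_one, div_one, ENNReal.rpow_one]
    refine iSup₂_le fun t ht => ?_
    refine (mul_le_mul_right (distFn_add μ u v t) _).trans ?_
    rw [mul_add]
    exact add_le_add (le_iSup₂_of_le t ht le_rfl) (le_iSup₂_of_le t ht le_rfl)

lemma lor_env (p q : ℝ≥0∞)
    (h₁ : (1 < p ∧ p < ∞ ∧ 1 < q ∧ q < ∞) ∨ (p = 1 ∧ q = ∞)) (B : ℝ) (hB : 0 < B) :
    lorentzNorm volume p q (fun x : ℝ => ENNReal.ofReal (B / (1 + |x|) ^ 2)) ≠ ∞ := by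
  set G : ℝ → ℝ≥0∞ := fun x : ℝ => ENNReal.ofReal (B / (1 + |x|) ^ 2) with hG
  have hd : ∀ t, 0 < t → distFn volume G t ≤
      if t < B then ENNReal.ofReal (2 * B ^ (1/2 : ℝ) * t ^ (-(1/2) : ℝ)) else 0 := by
    intro t ht
    have hpos : ∀ x ∈ {x | ENNReal.ofReal t < G x}, t * (1 + |x|) ^ 2 < B := by
      intro x hx
      have := (ENNReal.ofReal_lt_ofReal_iff_of_nonneg ht.le).1 hx
      rwa [lt_div_iff₀ (by positivity)] at this
    split_ifs with htB
    · have : {x | ENNReal.ofReal t < G x} ⊆ Set.Icc (-Real.sqrt (B / t)) (Real.sqrt (B / t)) := by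
        intro x hx
        have h := hpos x hx
        rw [Set.mem_Icc, ← abs_le]
        apply Real.le_sqrt_of_sq_le
        rw [le_div_iff₀ ht]
        nlinarith [abs_nonneg x, mul_nonneg ht.le (abs_nonneg x)]
      refine (measure_mono this).trans ?_
      rw [Real.volume_Icc]
      apply ENNReal.ofReal_le_ofReal
      rw [Real.sqrt_eq_rpow, Real.div_rpow hB.le ht.le, Real.rpow_neg ht.le]
      apply le_of_eq
      field_simp
      ring
    · have : {x | ENNReal.ofReal t < G x} = ∅ := by
        ext x
        simp only [Set.mem_empty_iff_false, iff_false]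
        intro hx
        have h := hpos x hx
        nlinarith [abs_nonneg x, mul_nonneg ht.le (abs_nonneg x), sq_nonneg x, sq_abs x,
          mul_nonneg ht.le (sq_nonneg |x|)]
      unfold distFn
      rw [this]; simp
  rcases h₁ with ⟨hp, hp', hq, hq'⟩ | ⟨rfl, rfl⟩
  · have hpr : 1 < p.toReal := by
      rw [← ENNReal.toReal_one]; exact (ENNReal.toReal_lt_toReal (by simp) hp'.ne).2 hp
    have hqr : 1 < q.toReal := by
      rw [← ENNReal.toReal_one]; exact (ENNReal.toReal_lt_toReal (by simp) hq'.ne).2 hq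
    unfold lorentzNorm
    rw [if_neg hq'.ne]
    set r := q.toReal / p.toReal with hr
    have hr0 : 0 < r := by positivity
    have hrq : r < q.toReal := by
      rw [hr, div_lt_iff₀ (by positivity)]; nlinarith
    refine ENNReal.rpow_ne_top_of_nonneg (by positivity) (ENNReal.mul_ne_top hq'.ne ?_)
    have hIntg : IntegrableOn (fun t : ℝ => (2 * B ^ (1/2 : ℝ)) ^ r * t ^ (q.toReal - 1 - r / 2))
        (Set.Ioo 0 B) := by
      apply Integrable.const_mul
      exact (intervalIntegral.integrableOn_Ioo_rpow_iff hB).2 (by linarith)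
    refine ne_of_lt (lt_of_le_of_lt ?_ hIntg.lintegral_lt_top)
    rw [← lintegral_indicator measurableSet_Ioi, ← lintegral_indicator measurableSet_Ioo]
    refine lintegral_mono fun t => ?_
    simp only [Set.indicator, Set.mem_Ioi, Set.mem_Ioo]
    by_cases ht : 0 < t
    swap
    · simp [ht]
    simp only [ht, if_true, true_and]
    have := hd t ht
    split_ifs at this ⊢ with htB
    · refine (mul_le_mul_right (ENNReal.rpow_le_rpow this hr0.le) _).trans ?_
      rw [ENNReal.ofReal_rpow_of_pos (by positivity), ← ENNReal.ofReal_mul (by positivity)]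
      apply ENNReal.ofReal_le_ofReal
      rw [Real.mul_rpow (by positivity) (by positivity), ← Real.rpow_mul ht.le]
      rw [mul_left_comm, ← Real.rpow_add ht]
      apply le_of_eq
      congr 2
      ring
    · have h0 : distFn volume G t = 0 := le_antisymm this bot_le
      simp [h0, hr0]
  · unfold lorentzNorm
    simp only [if_true, ENNReal.toReal_one, div_one, ENNReal.rpow_one]
    refine ne_of_lt (lt_of_le_of_lt (b := ENNReal.ofReal (2 * B)) ?_ ENNReal.ofReal_lt_top)
    refine iSup₂_le fun t ht => ?_
    refine (mul_le_mul_right (hd t ht) _).trans ?_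
    have ht' : 0 < t := ht
    split_ifs with htB
    · rw [← ENNReal.ofReal_mul ht'.le]
      apply ENNReal.ofReal_le_ofReal
      have e1 : t * t ^ (-(1/2) : ℝ) = t ^ (1/2 : ℝ) := by
        rw [← Real.rpow_one_add' ht'.le (by norm_num)]; norm_num
      have e2 : t ^ (1/2 : ℝ) ≤ B ^ (1/2 : ℝ) := Real.rpow_le_rpow ht'.le htB.le (by norm_num)
      have e3 : B ^ (1/2 : ℝ) * B ^ (1/2 : ℝ) = B := by
        rw [← Real.rpow_add hB]; norm_num
      calc t * (2 * B ^ (1/2 : ℝ) * t ^ (-(1/2) : ℝ))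
          = 2 * B ^ (1/2 : ℝ) * (t * t ^ (-(1/2) : ℝ)) := by ring
        _ ≤ 2 * B ^ (1/2 : ℝ) * B ^ (1/2 : ℝ) := by rw [e1]; gcongr
        _ = 2 * B := by rw [mul_assoc, e3]
    · simp

lemma distFn_fatou {X : Type*} [MeasurableSpace X] (μ : Measure X) (F : ℕ → X → ℝ≥0∞)
    (hF : ∀ j, Measurable (F j)) (G : X → ℝ≥0∞)
    (hlim : ∀ x, Tendsto (fun j => F j x) atTop (nhds (G x))) (t : ℝ) :
    distFn μ G t ≤ liminf (fun j => distFn μ (F j) t) atTop := by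
  have hm : ∀ j, MeasurableSet {x | ENNReal.ofReal t < F j x} := fun j =>
    measurableSet_lt measurable_const (hF j)
  have h1 : ∀ j, distFn μ (F j) t =
      ∫⁻ x, Set.indicator {x | ENNReal.ofReal t < F j x} (fun _ => 1) x ∂μ := by
    intro j; rw [lintegral_indicator_const (hm j)]; simp [distFn]
  have h2 : distFn μ G t =
      ∫⁻ x, Set.indicator {x | ENNReal.ofReal t < G x} (fun _ => 1) x ∂μ := by
    rw [lintegral_indicator_const]; · simp [distFn]
    exact measurableSet_lt measurable_const
      (measurable_of_tendsto_metrizable hF (tendsto_pi_nhds.2 hlim))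
  simp only [h1]
  rw [h2]
  refine le_trans (lintegral_mono fun x => ?_)
    (lintegral_liminf_le fun j => measurable_const.indicator (hm j))
  by_cases hx : ENNReal.ofReal t < G x
  · simp only [Set.indicator, Set.mem_ofPred_eq, hx, if_true]
    refine le_liminf_of_le (by isBoundedDefault) ?_
    filter_upwards [(hlim x).eventually (lt_mem_nhds hx)] with j hj
    simp [hj]
  · simp [Set.indicator, hx]

lemma lor_fatou {X : Type*} [MeasurableSpace X] (μ : Measure X) (p q : ℝ≥0∞) (hq : q ≠ 0)
    (hq' : q ≠ ∞) (F : ℕ → X → ℝ≥0∞)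
    (hF : ∀ j, Measurable (F j)) (G : X → ℝ≥0∞)
    (hlim : ∀ x, Tendsto (fun j => F j x) atTop (nhds (G x))) :
    lorentzNorm μ p q G ≤ liminf (fun j => lorentzNorm μ p q (F j)) atTop := by
  unfold lorentzNorm
  simp only [hq', if_false]
  have hqr : 0 < q.toReal := ENNReal.toReal_pos hq hq'
  set r := q.toReal / p.toReal
  have hr0 : 0 ≤ r := by positivity
  have hmono : Monotone fun I : ℝ≥0∞ => (q * I) ^ (1 / q.toReal) := fun a b hab => by
    dsimp only; gcongr
  have hcont : Continuous fun I : ℝ≥0∞ => (q * I) ^ (1 / q.toReal) :=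
    ENNReal.continuous_rpow_const.comp (ENNReal.continuous_const_mul hq')
  have := hmono.map_liminf_of_continuousAt (F := atTop) (fun j => ∫⁻ t in Set.Ioi (0:ℝ),
    ENNReal.ofReal (t ^ (q.toReal - 1)) * distFn μ (F j) t ^ r) hcont.continuousAt
  simp only [Function.comp_def] at this
  rw [← this]
  apply hmono
  refine le_trans (lintegral_mono fun t => ?_)
    (lintegral_liminf_le fun j => lor_integrand_meas _ _ _ _)
  have hmono2 : Monotone fun d : ℝ≥0∞ => ENNReal.ofReal (t ^ (q.toReal - 1)) * d ^ r :=
    fun a b hab => by dsimp only; gcongr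
  have hcont2 : Continuous fun d : ℝ≥0∞ => ENNReal.ofReal (t ^ (q.toReal - 1)) * d ^ r :=
    (ENNReal.continuous_const_mul ENNReal.ofReal_ne_top).comp ENNReal.continuous_rpow_const
  have := hmono2.map_liminf_of_continuousAt (F := atTop) (fun j => distFn μ (F j) t)
    hcont2.continuousAt
  simp only [Function.comp_def] at this
  rw [← this]
  exact hmono2 (distFn_fatou μ F hF G hlim t)

lemma vol_floor (t : ℝ) (ht : 0 < t) (S : Set ℤ) :
    volume ((fun x : ℝ => ⌊t * x⌋) ⁻¹' S) = ENNReal.ofReal t⁻¹ * Measure.count S := by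
  have hmeas : Measurable fun x : ℝ => ⌊t * x⌋ := by fun_prop
  have : (volume.map (fun x : ℝ => ⌊t * x⌋)) = ENNReal.ofReal t⁻¹ • Measure.count := by
    apply Measure.ext_of_singleton
    intro k
    rw [Measure.map_apply hmeas (measurableSet_singleton _)]
    have : (fun x : ℝ => ⌊t * x⌋) ⁻¹' {k} = Set.Ico (k / t) ((k + 1) / t) := by
      ext x
      simp only [Set.mem_preimage, Set.mem_singleton_iff, Int.floor_eq_iff, Set.mem_Ico]
      rw [div_le_iff₀' ht, lt_div_iff₀' ht]
    rw [this, Real.volume_Ico]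
    simp
    congr 1
    field_simp
    ring
  rw [← Measure.map_apply hmeas (MeasurableSet.of_discrete), this]
  simp

lemma lor_floor (t : ℝ) (ht : 0 < t) (p q : ℝ≥0∞) (hp : p ≠ 0) (hp' : p ≠ ∞) (hq : q ≠ 0)
    (a : ℤ → ℝ≥0∞) :
    lorentzNorm volume p q (fun x : ℝ => a ⌊t * x⌋) =
      ENNReal.ofReal (t⁻¹ ^ (1 / p.toReal)) * lorentzNorm Measure.count p q a := by
  have hpr : 0 < p.toReal := ENNReal.toReal_pos hp hp'
  have hd : ∀ s, distFn volume (fun x : ℝ => a ⌊t * x⌋) s =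
      ENNReal.ofReal t⁻¹ * distFn Measure.count a s := fun s => vol_floor t ht {k | ENNReal.ofReal s < a k}
  have ht' : 0 < t⁻¹ := by positivity
  rw [← ENNReal.ofReal_rpow_of_pos ht']
  unfold lorentzNorm
  simp only [hd]
  split_ifs with h
  · simp only [ENNReal.mul_iSup]
    refine iSup_congr fun s => iSup_congr fun _ => ?_
    rw [ENNReal.mul_rpow_of_nonneg _ _ (by positivity), mul_left_comm]
  · have hqr : 0 < q.toReal := ENNReal.toReal_pos hq h
    have : ∀ s : ℝ, ENNReal.ofReal (s ^ (q.toReal - 1)) *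
        (ENNReal.ofReal t⁻¹ * distFn Measure.count a s) ^ (q.toReal / p.toReal) =
        ENNReal.ofReal t⁻¹ ^ (q.toReal / p.toReal) * (ENNReal.ofReal (s ^ (q.toReal - 1)) *
        (distFn Measure.count a s) ^ (q.toReal / p.toReal)) := by
      intro s
      rw [ENNReal.mul_rpow_of_nonneg _ _ (by positivity), mul_left_comm]
    simp only [this]
    rw [lintegral_const_mul' _ _ (ENNReal.rpow_ne_top_of_nonneg (by positivity) (by simp)),
      mul_left_comm, ENNReal.mul_rpow_of_nonneg _ _ (by positivity), ← ENNReal.rpow_mul]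
    congr 2
    field_simp

lemma schwartz_decay (f : 𝓢(ℝ, ℂ)) : ∃ B : ℝ, 0 < B ∧ ∀ x, ‖f x‖ ≤ B / (1 + |x|) ^ 2 := by
  refine ⟨2 ^ 2 * (Finset.Iic ((2, 0) : ℕ × ℕ)).sup
    (fun m => SchwartzMap.seminorm ℝ m.1 m.2) f + 1, by positivity, fun x => ?_⟩
  have := SchwartzMap.one_add_le_sup_seminorm_apply (𝕜 := ℝ) (m := (2, 0)) (k := 2) (n := 0)
    le_rfl le_rfl f x
  rw [norm_iteratedFDeriv_zero, Real.norm_eq_abs] at this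
  dsimp only at this
  rw [le_div_iff₀ (by positivity), mul_comm]
  linarith

lemma schwartz_sample (f : 𝓢(ℝ, ℂ)) : ∃ B : ℝ, 0 < B ∧ (∀ x, ‖f x‖ ≤ B / (1 + |x|) ^ 2) ∧
    ∀ t : ℝ, 1 ≤ t → ∀ x : ℝ, ‖f (⌊t * x⌋ / t)‖ ≤ ‖f x‖ + t⁻¹ * (B / (1 + |x|) ^ 2) := by
  obtain ⟨B₁, hB₁, h₁⟩ := schwartz_decay f
  obtain ⟨B₂, hB₂, h₂⟩ := schwartz_decay (SchwartzMap.derivCLM ℝ ℂ f)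
  refine ⟨B₁ + 4 * B₂, by positivity, fun x => (h₁ x).trans (by gcongr; linarith), ?_⟩
  intro t ht x
  have ht0 : 0 < t := by linarith
  have hy1 : ⌊t * x⌋ / t ≤ x := by
    rw [div_le_iff₀ ht0, mul_comm x]; exact Int.floor_le _
  have hy2 : x - ⌊t * x⌋ / t ≤ t⁻¹ := by
    have := (Int.lt_floor_add_one (t * x)).le
    rw [sub_le_iff_le_add, ← one_div, ← add_div, le_div_iff₀ ht0]
    linarith
  have hti : t⁻¹ ≤ 1 := inv_le_one_of_one_le₀ ht
  set y : ℝ := ⌊t * x⌋ / t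
  have hmv := (convex_Icc y x).norm_image_sub_le_of_norm_deriv_le (f := f)
    (C := 4 * B₂ / (1 + |x|) ^ 2) (fun z _ => f.differentiableAt) (fun z hz => by
      have := h₂ z
      rw [SchwartzMap.derivCLM_apply] at this
      refine this.trans ?_
      have hxz : |x| ≤ |z| + 1 := by
        have : |x| ≤ |z| + |x - z| := by
          have := abs_add_le z (x - z); simpa using this
        have h3 : |x - z| ≤ 1 := by
          rw [abs_le]; constructor <;> linarith [hz.1, hz.2]
        linarith
      rw [div_le_div_iff₀ (by positivity) (by positivity)]
      have h5 : (1 + |x|) ^ 2 ≤ (2 * (1 + |z|)) ^ 2 := by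
        gcongr; linarith [abs_nonneg z]
      nlinarith) (Set.right_mem_Icc.2 hy1) (Set.left_mem_Icc.2 hy1)
  have h6 : ‖f y‖ ≤ ‖f x‖ + ‖f y - f x‖ := by
    have := norm_add_le (f x) (f y - f x); simpa using this
  refine h6.trans ?_
  gcongr
  refine hmv.trans ?_
  rw [Real.norm_eq_abs, abs_sub_comm, abs_of_nonneg (sub_nonneg.2 hy1), mul_comm]
  gcongr
  linarith

lemma samp_summable (f : 𝓢(ℝ, ℂ)) (t : ℝ) (ht : 0 < t) :
    Summable fun k : ℤ => ‖f (k / t)‖ := by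
  have ht' : t⁻¹ ≠ 0 := by positivity
  set s : 𝓢(ℝ, ℂ) := SchwartzMap.compCLMOfContinuousLinearEquiv ℂ
    (ContinuousLinearEquiv.unitsEquivAut ℝ (Units.mk0 t⁻¹ ht')) f with hs
  have : Summable fun k : ℤ => s k := summable_of_isBigO (Real.summable_abs_int_rpow one_lt_two)
    ((s.isBigO_cocompact_rpow (-2)).comp_tendsto Int.tendsto_coe_cofinite)
  exact this.norm

lemma poisson (f : 𝓢(ℝ, ℂ)) (R t : ℝ) (hR : ∀ ξ, R < |ξ| → 𝓕 (f : ℝ → ℂ) ξ = 0)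
    (ht : 0 < t) (htR : 2 * R < t) (ξ : ℝ) (hξ : ξ ∈ Set.Icc (-(1/2) : ℝ) (1/2)) :
    HasSum (fun k : ℤ => f (k / t) * Complex.exp (-(2 * Real.pi) * Complex.I * (k : ℂ) * (ξ : ℂ)))
      (t * 𝓕 (f : ℝ → ℂ) (t * ξ)) := by
  have ht' : -t⁻¹ ≠ 0 := by simpa using ht.ne'
  set s : 𝓢(ℝ, ℂ) := SchwartzMap.compCLMOfContinuousLinearEquiv ℂ
    (ContinuousLinearEquiv.unitsEquivAut ℝ (Units.mk0 (-t⁻¹) ht')) f with hs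
  have hsa : ∀ x, s x = f (-t⁻¹ * x) := fun x => by rw [mul_comm]; rfl
  have hF : ∀ ζ : ℝ, (𝓕⁻ s) ζ = t * 𝓕 (f : ℝ → ℂ) (t * ζ) := by
    intro ζ
    rw [SchwartzMap.fourierInv_coe, Real.fourierInv_eq', Real.fourier_eq']
    have := Measure.integral_comp_mul_left (fun v : ℝ =>
      Complex.exp (((-2 * Real.pi * inner ℝ v (t * ζ) : ℝ) : ℂ) * Complex.I) • f v) (-t⁻¹)
    rw [inv_neg, inv_inv, abs_neg, abs_of_pos ht] at this
    rw [Complex.real_smul] at this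
    rw [← this]
    congr 1
    ext v
    rw [hsa]
    congr 4
    simp
    field_simp
  have hsum : Summable fun k : ℤ => f (k / t) *
      Complex.exp (-(2 * Real.pi) * Complex.I * (k : ℂ) * (ξ : ℂ)) := by
    refine Summable.of_norm ?_
    refine (samp_summable f t ht).congr fun k => ?_
    rw [norm_mul]
    have : (-(2 * Real.pi) * Complex.I * (k : ℂ) * (ξ : ℂ)) =
      ((-(2 * Real.pi) * k * ξ : ℝ) : ℂ) * Complex.I := by push_cast; ring
    rw [this, Complex.norm_exp_ofReal_mul_I, mul_one]
  have hP := SchwartzMap.tsum_eq_tsum_fourier (𝓕⁻ s) ξ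
  rw [FourierTransform.fourier_fourierInv_eq] at hP
  rw [tsum_eq_single 0] at hP
  · rw [Int.cast_zero, add_zero, hF, ← (Equiv.neg ℤ).tsum_eq] at hP
    rw [hP]
    convert! hsum.hasSum using 1
    refine tsum_congr fun k => ?_
    rw [hsa, fourier_coe_apply]
    simp only [Equiv.neg_apply]
    congr 2
    · push_cast; ring
    · push_cast; ring
  · intro n hn
    rw [hF, hR, mul_zero]
    rw [abs_mul, abs_of_pos ht]
    have h1 : (1:ℝ) ≤ |(n:ℝ)| := by exact_mod_cast Int.one_le_abs hn
    have h2 : |ξ| ≤ 1/2 := abs_le.2 hξ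
    have h3 : |(n:ℝ)| ≤ |ξ + n| + |ξ| := by
      have := abs_sub (ξ + n) ξ; simpa using this
    nlinarith

lemma supp_bound (f : 𝓢(ℝ, ℂ)) (hf : HasCompactSupport (𝓕 (f : ℝ → ℂ))) :
    ∃ R : ℝ, ∀ ξ, R < |ξ| → 𝓕 (f : ℝ → ℂ) ξ = 0 := by
  obtain ⟨R, hR⟩ := hf.isCompact.isBounded.exists_norm_le
  refine ⟨R, fun ξ h => ?_⟩
  by_contra hne
  exact absurd (hR ξ (subset_tsupport _ hne)) (not_le.2 h)

/-- truncation of a sequence -/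
noncomputable def trunc (a : ℤ → ℂ) (N : ℕ) (k : ℤ) : ℂ :=
  Set.indicator (Finset.Icc (-(N:ℤ)) N : Set ℤ) a k

lemma trunc_supp (a : ℤ → ℂ) (N : ℕ) : (Function.support (trunc a N)).Finite :=
  (Finset.Icc (-(N:ℤ)) N).finite_toSet.subset (Set.support_indicator_subset)

lemma trigP_trunc (a : ℤ → ℂ) (N : ℕ) (ξ : ℝ) :
    trigP (trunc a N) ξ = ∑ k ∈ Finset.Icc (-(N:ℤ)) N,
      a k * Complex.exp (-(2 * Real.pi) * Complex.I * (k : ℂ) * (ξ : ℂ)) := by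
  unfold trigP
  rw [finsum_eq_sum_of_support_subset (s := Finset.Icc (-(N:ℤ)) N)]
  · refine Finset.sum_congr rfl fun k hk => ?_
    unfold trunc
    rw [Set.indicator_of_mem (by exact_mod_cast hk)]
  · intro k hk
    by_contra h
    apply hk
    simp only [trunc]
    rw [Set.indicator_of_notMem h, zero_mul]

lemma norm_e (c ξ : ℝ) (z : ℂ) (h : z = ((c * ξ : ℝ) : ℂ) * Complex.I) :
    ‖Complex.exp z‖ = 1 := by
  rw [h, Complex.norm_exp_ofReal_mul_I]

lemma trigP_trunc_le (a : ℤ → ℂ) (ha : Summable fun k => ‖a k‖) (N : ℕ) (ξ : ℝ) :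
    ‖trigP (trunc a N) ξ‖ ≤ ∑' k, ‖a k‖ := by
  rw [trigP_trunc]
  refine (norm_sum_le _ _).trans ?_
  refine le_trans (le_of_eq ?_) (ha.sum_le_tsum (Finset.Icc (-(N:ℤ)) N) fun k _ => norm_nonneg _)
  refine Finset.sum_congr rfl fun k _ => ?_
  rw [norm_mul, norm_e (-(2 * Real.pi) * k) ξ _ (by push_cast; ring), mul_one]

lemma trigP_trunc_cont (a : ℤ → ℂ) (N : ℕ) : Continuous (trigP (trunc a N)) := by
  have : trigP (trunc a N) = fun ξ : ℝ => ∑ k ∈ Finset.Icc (-(N:ℤ)) N,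
      a k * Complex.exp (-(2 * Real.pi) * Complex.I * (k : ℂ) * (ξ : ℂ)) :=
    funext fun ξ => trigP_trunc a N ξ
  rw [this]
  fun_prop

lemma trigP_trunc_lim (a : ℤ → ℂ) (ξ : ℝ) (s : ℂ)
    (h : HasSum (fun k : ℤ => a k * Complex.exp (-(2 * Real.pi) * Complex.I * (k : ℂ) * (ξ : ℂ))) s) :
    Tendsto (fun N : ℕ => trigP (trunc a N) ξ) atTop (nhds s) := by
  simp only [trigP_trunc]
  exact (h.comp (Finset.tendsto_Icc_neg_atTop_atTop (α := ℤ))).comp tendsto_natCast_atTop_atTop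

lemma fourier_cont (f : 𝓢(ℝ, ℂ)) : Continuous (𝓕 (f : ℝ → ℂ)) := (𝓕 f).continuous

/-- the box -/
def bx : Set ℝ := Set.Icc (-(1/2) : ℝ) (1/2)

lemma Dop_limit_eq (m : ℝ × ℝ → ℂ) (f g : 𝓢(ℝ, ℂ)) (R t : ℝ)
    (hf : ∀ ξ, R < |ξ| → 𝓕 (f : ℝ → ℂ) ξ = 0) (hg : ∀ ξ, R < |ξ| → 𝓕 (g : ℝ → ℂ) ξ = 0)
    (ht : 0 < t) (htR : 2 * R < t) (n : ℤ) :
    ∫ ξ in bx, ∫ η in bx,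
      (t * 𝓕 (f : ℝ → ℂ) (t * ξ)) * (t * 𝓕 (g : ℝ → ℂ) (t * η)) * m (t * ξ, t * η) *
        Complex.exp (2 * Real.pi * Complex.I * (n : ℂ) * ((ξ : ℂ) + (η : ℂ)))
      = Cm m f g (n / t) := by
  set Ψ : ℝ → ℝ → ℂ := fun ξ η => 𝓕 (f : ℝ → ℂ) ξ * 𝓕 (g : ℝ → ℂ) η * m (ξ, η) *
    Complex.exp (2 * Real.pi * Complex.I * ((n / t : ℝ) : ℂ) * ((ξ : ℂ) + (η : ℂ))) with hΨ
  have htc : (t : ℂ) ≠ 0 := by exact_mod_cast ht.ne'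
  have hE : ∀ ξ η : ℝ, (t * 𝓕 (f : ℝ → ℂ) (t * ξ)) * (t * 𝓕 (g : ℝ → ℂ) (t * η)) *
      m (t * ξ, t * η) * Complex.exp (2 * Real.pi * Complex.I * (n : ℂ) * ((ξ : ℂ) + (η : ℂ)))
      = t * (t * Ψ (t * ξ) (t * η)) := by
    intro ξ η
    have : 2 * Real.pi * Complex.I * (n : ℂ) * ((ξ : ℂ) + (η : ℂ)) =
      2 * Real.pi * Complex.I * ((n / t : ℝ) : ℂ) * (((t * ξ : ℝ) : ℂ) + ((t * η : ℝ) : ℂ)) := by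
      push_cast; field_simp
    rw [this]
    simp only [hΨ]
    ring
  have hout : ∀ ξ : ℝ, ξ ∉ bx → R < |t * ξ| := by
    intro ξ hξ
    rw [abs_mul, abs_of_pos ht]
    have : 1/2 < |ξ| := by
      by_contra h
      exact hξ (abs_le.1 (not_lt.1 h))
    nlinarith
  simp only [hE]
  have hin : ∀ ξ, ∫ η in bx, (t * (t * Ψ (t * ξ) (t * η)) : ℂ) = t * ∫ η, Ψ (t * ξ) η := by
    intro ξ
    rw [setIntegral_eq_integral_of_forall_compl_eq_zero]
    · rw [integral_const_mul, integral_const_mul, Measure.integral_comp_mul_left (Ψ (t * ξ)) t,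
        abs_of_pos (inv_pos.2 ht), Complex.real_smul]
      push_cast
      field_simp
    · intro η hη
      simp [hΨ, hg _ (hout η hη)]
  simp only [hin]
  rw [setIntegral_eq_integral_of_forall_compl_eq_zero]
  · rw [integral_const_mul, Measure.integral_comp_mul_left (fun ξ => ∫ η, Ψ ξ η) t,
        abs_of_pos (inv_pos.2 ht), Complex.real_smul]
    unfold Cm
    push_cast
    rw [mul_inv_cancel_left₀ htc]
    simp only [hΨ]
    push_cast
    rfl
  · intro ξ hξ
    simp [hΨ, hf _ (hout ξ hξ)]

lemma box_int (m : ℝ × ℝ → ℂ) (hm : Measurable m) (hb : LocallyBounded m) (t : ℝ) :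
    ∃ M : ℝ, ∀ (P Q : ℝ → ℂ) (A B : ℝ) (n : ℤ), Continuous P → Continuous Q → (∀ x, ‖P x‖ ≤ A) →
      (∀ x, ‖Q x‖ ≤ B) →
      (∀ z ∈ bx ×ˢ bx, ‖P z.1 * Q z.2 * m (t * z.1, t * z.2) *
        Complex.exp (2 * Real.pi * Complex.I * (n : ℂ) * ((z.1 : ℂ) + (z.2 : ℂ)))‖ ≤ A * B * M) ∧
      IntegrableOn (fun z : ℝ × ℝ => P z.1 * Q z.2 * m (t * z.1, t * z.2) *
        Complex.exp (2 * Real.pi * Complex.I * (n : ℂ) * ((z.1 : ℂ) + (z.2 : ℂ)))) (bx ×ˢ bx) := by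
  have hK : IsCompact (bx ×ˢ bx) := isCompact_Icc.prod isCompact_Icc
  obtain ⟨M, hM⟩ := hb ((fun z : ℝ × ℝ => (t * z.1, t * z.2)) '' (bx ×ˢ bx))
    (hK.image (by fun_prop))
  refine ⟨M, fun P Q A B n hP hQ hA hB => ?_⟩
  have hbd : ∀ z ∈ bx ×ˢ bx, ‖P z.1 * Q z.2 * m (t * z.1, t * z.2) *
        Complex.exp (2 * Real.pi * Complex.I * (n : ℂ) * ((z.1 : ℂ) + (z.2 : ℂ)))‖ ≤ A * B * M := by
    intro z hz
    rw [norm_mul, norm_mul, norm_mul, norm_e (2 * Real.pi * n) (z.1 + z.2) _ (by push_cast; ring),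
      mul_one]
    have h1 := hA z.1
    have h2 := hB z.2
    have h3 := hM _ ⟨z, hz, rfl⟩
    have h4 := (norm_nonneg _).trans h1
    have h5 := (norm_nonneg _).trans h2
    gcongr
  refine ⟨hbd, ?_⟩
  have hmeas : Measurable (fun z : ℝ × ℝ => P z.1 * Q z.2 * m (t * z.1, t * z.2) *
        Complex.exp (2 * Real.pi * Complex.I * (n : ℂ) * ((z.1 : ℂ) + (z.2 : ℂ)))) := by
    have h1 : Measurable fun z : ℝ × ℝ => m (t * z.1, t * z.2) := hm.comp (by fun_prop)
    have h2 := hP.measurable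
    have h3 := hQ.measurable
    fun_prop
  refine Measure.integrableOn_of_bounded (M := A * B * M) hK.measure_lt_top.ne
    hmeas.aestronglyMeasurable ?_
  exact (ae_restrict_iff' (measurableSet_Icc.prod measurableSet_Icc)).2 (Eventually.of_forall hbd)

lemma Dop_tendsto (m : ℝ × ℝ → ℂ) (hm : Measurable m) (hb : LocallyBounded m)
    (f g : 𝓢(ℝ, ℂ)) (R t p : ℝ)
    (hf : ∀ ξ, R < |ξ| → 𝓕 (f : ℝ → ℂ) ξ = 0) (hg : ∀ ξ, R < |ξ| → 𝓕 (g : ℝ → ℂ) ξ = 0)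
    (ht : 0 < t) (htR : 2 * R < t) (n : ℤ) :
    Tendsto (fun N : ℕ => Dop m t p (trunc (fun k => f (k / t)) N) (trunc (fun k => g (k / t)) N) n)
      atTop (nhds (((t ^ (1 / p) : ℝ) : ℂ) * Cm m f g (n / t))) := by
  unfold Dop
  refine Tendsto.const_mul _ ?_
  obtain ⟨M, hM⟩ := box_int m hm hb t
  have sf := samp_summable f t ht
  have sg := samp_summable g t ht
  have hN := fun N : ℕ => hM _ _ _ _ n (trigP_trunc_cont (fun k => f (k / t)) N)
    (trigP_trunc_cont (fun k => g (k / t)) N) (trigP_trunc_le _ sf N) (trigP_trunc_le _ sg N)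
  have bdd : ∀ h : 𝓢(ℝ, ℂ), ∃ A, ∀ x, ‖(t * 𝓕 (h : ℝ → ℂ) (t * x) : ℂ)‖ ≤ A := by
    intro h
    obtain ⟨B, hB, hh⟩ := schwartz_decay (𝓕 h)
    refine ⟨t * B, fun x => ?_⟩
    rw [norm_mul, Complex.norm_real, Real.norm_of_nonneg ht.le]
    gcongr
    refine (hh (t * x)).trans ?_
    apply div_le_self hB.le
    nlinarith [abs_nonneg (t * x)]
  obtain ⟨A₁, hA₁⟩ := bdd f
  obtain ⟨A₂, hA₂⟩ := bdd g
  have cont : ∀ h : 𝓢(ℝ, ℂ), Continuous fun x : ℝ => (t * 𝓕 (h : ℝ → ℂ) (t * x) : ℂ) := by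
    intro h
    have := fourier_cont h
    fun_prop
  have hL := hM _ _ _ _ n (cont f) (cont g) hA₁ hA₂
  rw [← Dop_limit_eq m f g R t hf hg ht htR n]
  have e1 := setIntegral_prod _ hL.2
  have e2 := fun N => setIntegral_prod _ (hN N).2
  dsimp only at e1 e2
  change Tendsto (fun N : ℕ => ∫ ξ in bx, ∫ η in bx, _) atTop _
  rw [← e1]
  simp only [← e2]
  refine tendsto_integral_of_dominated_convergence (fun _ => (∑' k : ℤ, ‖f (k / t)‖) *
    (∑' k : ℤ, ‖g (k / t)‖) * M) (fun N => (hN N).2.aestronglyMeasurable) ?_ ?_ ?_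
  · have : IsFiniteMeasure ((volume : Measure (ℝ × ℝ)).restrict (bx ×ˢ bx)) :=
      ⟨by rw [Measure.restrict_apply_univ]
          exact (isCompact_Icc.prod isCompact_Icc).measure_lt_top⟩
    exact integrable_const _
  · intro N
    exact (ae_restrict_iff' (measurableSet_Icc.prod measurableSet_Icc)).2
      (Eventually.of_forall (hN N).1)
  · refine (ae_restrict_iff' (measurableSet_Icc.prod measurableSet_Icc)).2
      (Eventually.of_forall fun z hz => ?_)
    refine Tendsto.mul_const _ (Tendsto.mul_const _ (Tendsto.mul ?_ ?_))
    · exact trigP_trunc_lim _ _ _ (poisson f R t hf ht htR z.1 hz.1)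
    · exact trigP_trunc_lim _ _ _ (poisson g R t hg ht htR z.2 hz.2)

lemma Cm_cont (m : ℝ × ℝ → ℂ) (hm : Measurable m) (hb : LocallyBounded m)
    (f g : 𝓢(ℝ, ℂ)) (R : ℝ)
    (hf : ∀ ξ, R < |ξ| → 𝓕 (f : ℝ → ℂ) ξ = 0) (hg : ∀ ξ, R < |ξ| → 𝓕 (g : ℝ → ℂ) ξ = 0) :
    Continuous (Cm m f g) := by
  set H : ℝ × ℝ → ℂ := fun z => 𝓕 (f : ℝ → ℂ) z.1 * 𝓕 (g : ℝ → ℂ) z.2 * m (z.1, z.2) with hH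
  have hHm : Measurable H := by
    have h2 := (fourier_cont f).measurable
    have h3 := (fourier_cont g).measurable
    fun_prop
  have hK : IsCompact (Set.Icc (-R) R ×ˢ Set.Icc (-R) R) := isCompact_Icc.prod isCompact_Icc
  have hHi : Integrable H := by
    obtain ⟨M, hM⟩ := hb _ hK
    obtain ⟨A, hA, hA'⟩ := schwartz_decay (𝓕 f)
    obtain ⟨B, hB, hB'⟩ := schwartz_decay (𝓕 g)
    have : IntegrableOn H (Set.Icc (-R) R ×ˢ Set.Icc (-R) R) := by
      refine Measure.integrableOn_of_bounded (M := A * B * M) hK.measure_lt_top.ne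
        hHm.aestronglyMeasurable ?_
      refine (ae_restrict_iff' (measurableSet_Icc.prod measurableSet_Icc)).2
        (Eventually.of_forall fun z hz => ?_)
      simp only [hH]
      rw [norm_mul, norm_mul]
      have h1 : ‖𝓕 (f : ℝ → ℂ) z.1‖ ≤ A := (hA' z.1).trans (div_le_self hA.le (by
        nlinarith [abs_nonneg z.1]))
      have h2 : ‖𝓕 (g : ℝ → ℂ) z.2‖ ≤ B := (hB' z.2).trans (div_le_self hB.le (by
        nlinarith [abs_nonneg z.2]))
      have h3 := hM z hz
      gcongr
    rw [integrableOn_iff_integrable_of_support_subset] at this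
    · exact this
    · intro z hz
      refine ⟨abs_le.1 (not_lt.1 fun h => hz ?_), abs_le.1 (not_lt.1 fun h => hz ?_)⟩
      · simp [hH, hf _ h]
      · simp [hH, hg _ h]
  have hnorm : ∀ (x : ℝ) (z : ℝ × ℝ), ‖H z * Complex.exp (2 * Real.pi * Complex.I * (x : ℂ) *
      ((z.1 : ℂ) + (z.2 : ℂ)))‖ = ‖H z‖ := by
    intro x z
    rw [norm_mul, norm_e (2 * Real.pi * x) (z.1 + z.2) _ (by push_cast; ring), mul_one]
  have hmeas : ∀ x : ℝ, AEStronglyMeasurable (fun z : ℝ × ℝ => H z *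
      Complex.exp (2 * Real.pi * Complex.I * (x : ℂ) * ((z.1 : ℂ) + (z.2 : ℂ)))) := by
    intro x
    apply Measurable.aestronglyMeasurable
    fun_prop
  have hCm : Cm m f g = fun x : ℝ => ∫ z : ℝ × ℝ, H z *
      Complex.exp (2 * Real.pi * Complex.I * (x : ℂ) * ((z.1 : ℂ) + (z.2 : ℂ))) := by
    ext x
    have hi : Integrable (fun z : ℝ × ℝ => H z *
        Complex.exp (2 * Real.pi * Complex.I * (x : ℂ) * ((z.1 : ℂ) + (z.2 : ℂ)))) :=
      hHi.norm.mono' (hmeas x) (Eventually.of_forall fun z => (hnorm x z).le)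
    have := integral_prod _ hi
    unfold Cm
    exact this.symm
  rw [hCm]
  refine continuous_of_dominated (bound := fun z => ‖H z‖) hmeas
    (fun x => Eventually.of_forall fun z => (hnorm x z).le) hHi.norm
    (Eventually.of_forall fun z => ?_)
  fun_prop

lemma expo_ok {p q : ℝ≥0∞} (h₁ : (1 < p ∧ p < ∞ ∧ 1 < q ∧ q < ∞) ∨ (p = 1 ∧ q = ∞)) :
    p ≠ 0 ∧ p ≠ ∞ ∧ q ≠ 0 := by
  rcases h₁ with ⟨hp, hp', hq, hq'⟩ | ⟨rfl, rfl⟩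
  · exact ⟨(zero_lt_one.trans hp).ne', hp'.ne, (zero_lt_one.trans hq).ne'⟩
  · simp

lemma discrete_bound (p₁ q₁ p₂ q₂ p₃ q₃ : ℝ≥0∞) (hq₃ : q₃ ≠ 0) (hq₃' : q₃ ≠ ∞) (p C : ℝ)
    (m : ℝ × ℝ → ℂ) (hm : Measurable m) (hb : LocallyBounded m)
    (H : ∀ t : ℝ, 0 < t → ∀ a b : ℤ → ℂ,
            (Function.support a).Finite → (Function.support b).Finite →
            lorentzNormC Measure.count p₃ q₃ (Dop m t p a b) ≤
              ENNReal.ofReal C * (lorentzNormC Measure.count p₁ q₁ a *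
                lorentzNormC Measure.count p₂ q₂ b))
    (f g : 𝓢(ℝ, ℂ)) (R t : ℝ)
    (hf : ∀ ξ, R < |ξ| → 𝓕 (f : ℝ → ℂ) ξ = 0) (hg : ∀ ξ, R < |ξ| → 𝓕 (g : ℝ → ℂ) ξ = 0)
    (ht : 0 < t) (htR : 2 * R < t) :
    ENNReal.ofReal (t ^ (1 / p)) *
      lorentzNorm Measure.count p₃ q₃ (fun n : ℤ => (‖Cm m f g (n / t)‖₊ : ℝ≥0∞)) ≤
      ENNReal.ofReal C * (lorentzNorm Measure.count p₁ q₁ (fun k : ℤ => (‖f (k / t)‖₊ : ℝ≥0∞)) *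
        lorentzNorm Measure.count p₂ q₂ (fun k : ℤ => (‖g (k / t)‖₊ : ℝ≥0∞))) := by
  rw [← lor_smul _ _ _ hq₃ _ (by positivity)]
  refine (lor_fatou Measure.count p₃ q₃ hq₃ hq₃'
    (fun N n => (‖Dop m t p (trunc (fun k => f (k / t)) N) (trunc (fun k => g (k / t)) N) n‖₊ : ℝ≥0∞))
    (fun N => Measurable.of_discrete) _ fun n => ?_).trans ?_
  · have := (Dop_tendsto m hm hb f g R t p hf hg ht htR n).enorm
    have h0 : 0 ≤ t ^ (1 / p) := by positivity
    rw [enorm_mul, ← ofReal_norm_eq_enorm ((t ^ (1 / p) : ℝ) : ℂ), Complex.norm_real,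
      Real.norm_of_nonneg h0] at this
    exact this
  · refine (liminf_le_liminf (v := fun _ => _) (Eventually.of_forall fun N => ?_)).trans_eq
      (liminf_const _)
    refine (H t ht _ _ (trunc_supp _ N) (trunc_supp _ N)).trans ?_
    have tr : ∀ (a : ℤ → ℂ) (k : ℤ), (‖trunc a N k‖₊ : ℝ≥0∞) ≤ ‖a k‖₊ := by
      intro a k
      have : ‖trunc a N k‖ ≤ ‖a k‖ := norm_indicator_le_norm_self _ _
      exact_mod_cast this
    unfold lorentzNormC
    gcongr
    · exact lor_mono _ _ _ (tr _)
    · exact lor_mono _ _ _ (tr _)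

lemma step_bound (p₁ q₁ p₂ q₂ p₃ q₃ : ℝ≥0∞)
    (h₁ : p₁ ≠ 0 ∧ p₁ ≠ ∞ ∧ q₁ ≠ 0) (h₂ : p₂ ≠ 0 ∧ p₂ ≠ ∞ ∧ q₂ ≠ 0) (h₃ : p₃ ≠ 0 ∧ p₃ ≠ ∞ ∧ q₃ ≠ 0)
    (p : ℝ) (hp : 1 / p = 1 / p₁.toReal + 1 / p₂.toReal - 1 / p₃.toReal) (t : ℝ) (ht : 0 < t)
    (c : ℝ≥0∞) (u v w : ℤ → ℝ≥0∞)
    (h : ENNReal.ofReal (t ^ (1 / p)) * lorentzNorm Measure.count p₃ q₃ w ≤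
      c * (lorentzNorm Measure.count p₁ q₁ u * lorentzNorm Measure.count p₂ q₂ v)) :
    lorentzNorm volume p₃ q₃ (fun x : ℝ => w ⌊t * x⌋) ≤
      c * (lorentzNorm volume p₁ q₁ (fun x : ℝ => u ⌊t * x⌋) *
        lorentzNorm volume p₂ q₂ (fun x : ℝ => v ⌊t * x⌋)) := by
  rw [lor_floor t ht _ _ h₁.1 h₁.2.1 h₁.2.2, lor_floor t ht _ _ h₂.1 h₂.2.1 h₂.2.2,
    lor_floor t ht _ _ h₃.1 h₃.2.1 h₃.2.2]
  have hti : 0 < t⁻¹ := by positivity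
  have e : t⁻¹ ^ (1 / p₃.toReal) =
      t⁻¹ ^ (1 / p₁.toReal) * t⁻¹ ^ (1 / p₂.toReal) * t ^ (1 / p) := by
    have : t ^ (1 / p) = t⁻¹ ^ (-(1 / p)) := by
      rw [Real.rpow_neg hti.le, Real.inv_rpow ht.le, inv_inv]
    rw [this, ← Real.rpow_add hti, ← Real.rpow_add hti]
    congr 1
    linarith
  rw [e, ENNReal.ofReal_mul (by positivity), ENNReal.ofReal_mul (by positivity), mul_assoc]
  refine (mul_le_mul_right h _).trans (le_of_eq ?_)
  ring

lemma cont_bound (p q K : ℝ≥0∞) (hq : q ≠ 0)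
    (hK : ∀ {X : Type} [MeasurableSpace X] (μ : Measure X) (u v : X → ℝ≥0∞),
      lorentzNorm μ p q (fun x => u x + v x) ≤ K * (lorentzNorm μ p q u + lorentzNorm μ p q v))
    (f : ℝ → ℂ) (B t : ℝ) (ht : 0 < t)
    (h : ∀ x : ℝ, ‖f (⌊t * x⌋ / t)‖ ≤ ‖f x‖ + t⁻¹ * (B / (1 + |x|) ^ 2)) :
    lorentzNorm volume p q (fun x : ℝ => (‖f (⌊t * x⌋ / t)‖₊ : ℝ≥0∞)) ≤
      K * (lorentzNorm volume p q (fun x : ℝ => (‖f x‖₊ : ℝ≥0∞)) + ENNReal.ofReal t⁻¹ *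
        lorentzNorm volume p q (fun x : ℝ => ENNReal.ofReal (B / (1 + |x|) ^ 2))) := by
  rw [← lor_smul _ _ _ hq _ (by positivity)]
  refine le_trans (lor_mono _ _ _ fun x => ?_) (hK _ _ _)
  have e : ∀ z : ℂ, (‖z‖₊ : ℝ≥0∞) = ENNReal.ofReal ‖z‖ := fun z => (ofReal_norm_eq_enorm z).symm
  rw [e, e, ← ENNReal.ofReal_mul (by positivity)]
  exact (ENNReal.ofReal_le_ofReal (h x)).trans ENNReal.ofReal_add_le

/-- Transference from `ℤ` to `ℝ`: if the discrete operators `D_{m̃_{t,p}}` are uniformly bounded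
on Lorentz sequence spaces, then `C_m` is bounded on Lorentz spaces over `ℝ`, with a constant
depending only on `C` and the exponents. -/
theorem stmt1 (p₁ q₁ p₂ q₂ p₃ q₃ : ℝ≥0∞)
    (h₁ : (1 < p₁ ∧ p₁ < ∞ ∧ 1 < q₁ ∧ q₁ < ∞) ∨ (p₁ = 1 ∧ q₁ = ∞))
    (h₂ : (1 < p₂ ∧ p₂ < ∞ ∧ 1 < q₂ ∧ q₂ < ∞) ∨ (p₂ = 1 ∧ q₂ = ∞))
    (hp₃ : 0 < p₃) (hp₃' : p₃ < ∞) (hq₃ : 0 < q₃) (hq₃' : q₃ < ∞)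
    (p : ℝ) (hp : 1 / p = 1 / p₁.toReal + 1 / p₂.toReal - 1 / p₃.toReal)
    (C : ℝ) (hC : 0 < C) :
    ∃ C' : ℝ, 0 < C' ∧
      ∀ m : ℝ × ℝ → ℂ, Measurable m → LocallyBounded m →
        (∀ t : ℝ, 0 < t → ∀ a b : ℤ → ℂ,
            (Function.support a).Finite → (Function.support b).Finite →
            lorentzNormC Measure.count p₃ q₃ (Dop m t p a b) ≤
              ENNReal.ofReal C * (lorentzNormC Measure.count p₁ q₁ a *
                lorentzNormC Measure.count p₂ q₂ b)) →
        ∀ f g : 𝓢(ℝ, ℂ), HasCompactSupport (𝓕 (f : ℝ → ℂ)) →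
          HasCompactSupport (𝓕 (g : ℝ → ℂ)) →
          lorentzNormC volume p₃ q₃ (Cm m f g) ≤
            ENNReal.ofReal C' * (lorentzNormC volume p₁ q₁ (fun x => f x) *
              lorentzNormC volume p₂ q₂ (fun x => g x)) := by
  have e₁ := expo_ok h₁
  have e₂ := expo_ok h₂
  obtain ⟨K₁, hK₁, hK₁'⟩ := lor_add p₁ q₁ h₁
  obtain ⟨K₂, hK₂, hK₂'⟩ := lor_add p₂ q₂ h₂
  refine ⟨C * K₁.toReal * K₂.toReal + 1, by positivity, ?_⟩
  intro m hm hb H f g hf hg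
  obtain ⟨R₁, hR₁⟩ := supp_bound f hf
  obtain ⟨R₂, hR₂⟩ := supp_bound g hg
  obtain ⟨B₁, hB₁, hd₁, hs₁⟩ := schwartz_sample f
  obtain ⟨B₂, hB₂, hd₂, hs₂⟩ := schwartz_sample g
  set R := max (max R₁ R₂) 0 with hR
  have hR0 : 0 ≤ R := le_max_right _ _
  have hfR : ∀ ξ, R < |ξ| → 𝓕 (f : ℝ → ℂ) ξ = 0 := fun ξ h =>
    hR₁ ξ (lt_of_le_of_lt ((le_max_left _ _).trans (le_max_left _ _)) h)
  have hgR : ∀ ξ, R < |ξ| → 𝓕 (g : ℝ → ℂ) ξ = 0 := fun ξ h =>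
    hR₂ ξ (lt_of_le_of_lt ((le_max_right _ _).trans (le_max_left _ _)) h)
  have hcont := Cm_cont m hm hb f g R hfR hgR
  set t : ℕ → ℝ := fun j => j + (2 * R + 1) with ht
  have ht1 : ∀ j, 1 ≤ t j := fun j => by
    have : (0:ℝ) ≤ j := Nat.cast_nonneg j
    simp only [ht]; linarith
  have ht0 : ∀ j, 0 < t j := fun j => zero_lt_one.trans_le (ht1 j)
  have htR : ∀ j, 2 * R < t j := fun j => by
    have : (0:ℝ) ≤ j := Nat.cast_nonneg j
    simp only [ht]; linarith
  have htop : Tendsto t atTop atTop := tendsto_atTop_add_const_right _ _ tendsto_natCast_atTop_atTop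
  have hti : Tendsto (fun j => (t j)⁻¹) atTop (nhds 0) := tendsto_inv_atTop_zero.comp htop
  have htiE : Tendsto (fun j => ENNReal.ofReal (t j)⁻¹) atTop (nhds 0) := by
    have := ENNReal.tendsto_ofReal hti
    simpa using this
  have hnn : ∀ z : ℂ, (‖z‖₊ : ℝ≥0∞) = ENNReal.ofReal ‖z‖ := fun z => (ofReal_norm_eq_enorm z).symm
  set G₁ := lorentzNorm volume p₁ q₁ (fun x : ℝ => ENNReal.ofReal (B₁ / (1 + |x|) ^ 2)) with hG₁
  set G₂ := lorentzNorm volume p₂ q₂ (fun x : ℝ => ENNReal.ofReal (B₂ / (1 + |x|) ^ 2)) with hG₂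
  have fG₁ : G₁ ≠ ∞ := lor_env p₁ q₁ h₁ B₁ hB₁
  have fG₂ : G₂ ≠ ∞ := lor_env p₂ q₂ h₂ B₂ hB₂
  unfold lorentzNormC
  set N₁ := lorentzNorm volume p₁ q₁ (fun x : ℝ => (‖f x‖₊ : ℝ≥0∞)) with hN₁
  set N₂ := lorentzNorm volume p₂ q₂ (fun x : ℝ => (‖g x‖₊ : ℝ≥0∞)) with hN₂
  have fN₁ : N₁ ≠ ∞ := ne_top_of_le_ne_top fG₁ (lor_mono _ _ _ fun x => by
    rw [hnn]; exact ENNReal.ofReal_le_ofReal (hd₁ x))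
  have fN₂ : N₂ ≠ ∞ := ne_top_of_le_ne_top fG₂ (lor_mono _ _ _ fun x => by
    rw [hnn]; exact ENNReal.ofReal_le_ofReal (hd₂ x))
  have hfloor : ∀ x : ℝ, Tendsto (fun j => ((⌊t j * x⌋ : ℝ) / t j)) atTop (nhds x) := by
    intro x
    have h1 : Tendsto (fun j => x - (t j)⁻¹) atTop (nhds x) := by
      simpa using tendsto_const_nhds.sub hti
    refine tendsto_of_tendsto_of_tendsto_of_le_of_le h1 tendsto_const_nhds (fun j => ?_) fun j => ?_
    · have := (Int.lt_floor_add_one (t j * x)).le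
      dsimp only
      rw [sub_le_iff_le_add, ← one_div, ← add_div, le_div_iff₀ (ht0 j)]
      linarith
    · dsimp only
      rw [div_le_iff₀ (ht0 j), mul_comm x]; exact Int.floor_le _
  have hbound : ∀ j, lorentzNorm volume p₃ q₃
      (fun x : ℝ => (‖Cm m f g (⌊t j * x⌋ / t j)‖₊ : ℝ≥0∞)) ≤
      ENNReal.ofReal C * ((K₁ * (N₁ + ENNReal.ofReal (t j)⁻¹ * G₁)) *
        (K₂ * (N₂ + ENNReal.ofReal (t j)⁻¹ * G₂))) := by
    intro j
    have hdisc := discrete_bound p₁ q₁ p₂ q₂ p₃ q₃ hq₃.ne' hq₃'.ne p C m hm hb H f g R (t j)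
      hfR hgR (ht0 j) (htR j)
    have hstep := step_bound p₁ q₁ p₂ q₂ p₃ q₃ e₁ e₂ ⟨hp₃.ne', hp₃'.ne, hq₃.ne'⟩ p hp (t j) (ht0 j)
      _ _ _ _ hdisc
    refine hstep.trans ?_
    gcongr
    · exact cont_bound p₁ q₁ K₁ e₁.2.2 hK₁' f B₁ (t j) (ht0 j) (hs₁ (t j) (ht1 j))
    · exact cont_bound p₂ q₂ K₂ e₂.2.2 hK₂' g B₂ (t j) (ht0 j) (hs₂ (t j) (ht1 j))
  have hlimfac : ∀ N G K : ℝ≥0∞, G ≠ ∞ → K ≠ ∞ → Tendsto (fun j => K * (N + ENNReal.ofReal (t j)⁻¹ * G))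
      atTop (nhds (K * N)) := by
    intro N G K hG hK
    have h1 : Tendsto (fun j => ENNReal.ofReal (t j)⁻¹ * G) atTop (nhds 0) := by
      simpa using ENNReal.Tendsto.mul_const htiE (Or.inr hG)
    have h2 : Tendsto (fun j => N + ENNReal.ofReal (t j)⁻¹ * G) atTop (nhds N) := by
      simpa using tendsto_const_nhds.add h1
    exact ENNReal.Tendsto.const_mul h2 (Or.inr hK)
  have hlim : Tendsto (fun j => ENNReal.ofReal C * ((K₁ * (N₁ + ENNReal.ofReal (t j)⁻¹ * G₁)) *
        (K₂ * (N₂ + ENNReal.ofReal (t j)⁻¹ * G₂)))) atTop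
        (nhds (ENNReal.ofReal C * ((K₁ * N₁) * (K₂ * N₂)))) :=
    ENNReal.Tendsto.const_mul (ENNReal.Tendsto.mul (hlimfac N₁ G₁ K₁ fG₁ hK₁)
      (Or.inr (ENNReal.mul_ne_top hK₂ fN₂)) (hlimfac N₂ G₂ K₂ fG₂ hK₂)
      (Or.inr (ENNReal.mul_ne_top hK₁ fN₁))) (Or.inr ENNReal.ofReal_ne_top)
  have hfin : lorentzNorm volume p₃ q₃ (fun x : ℝ => (‖Cm m f g x‖₊ : ℝ≥0∞)) ≤
      ENNReal.ofReal C * ((K₁ * N₁) * (K₂ * N₂)) := by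
    refine (lor_fatou volume p₃ q₃ hq₃.ne' hq₃'.ne
      (fun j (x : ℝ) => (‖Cm m f g (⌊t j * x⌋ / t j)‖₊ : ℝ≥0∞)) (fun j => ?_) _ fun x => ?_).trans ?_
    · have h1 : Measurable fun k : ℤ => (‖Cm m f g (k / t j)‖₊ : ℝ≥0∞) := Measurable.of_discrete
      have h2 : Measurable fun x : ℝ => ⌊t j * x⌋ := by fun_prop
      exact h1.comp h2
    · exact ((hcont.tendsto x).comp (hfloor x)).enorm
    · exact (liminf_le_liminf (Eventually.of_forall hbound)).trans_eq hlim.liminf_eq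
  refine hfin.trans ?_
  have hCK : ENNReal.ofReal C * K₁ * K₂ ≤ ENNReal.ofReal (C * K₁.toReal * K₂.toReal + 1) := by
    rw [← ENNReal.ofReal_toReal hK₁, ← ENNReal.ofReal_toReal hK₂, ← ENNReal.ofReal_mul hC.le,
      ← ENNReal.ofReal_mul (by positivity), ENNReal.toReal_ofReal (by positivity),
      ENNReal.toReal_ofReal (by positivity)]
    exact ENNReal.ofReal_le_ofReal (by linarith)
  calc ENNReal.ofReal C * ((K₁ * N₁) * (K₂ * N₂))
      = (ENNReal.ofReal C * K₁ * K₂) * (N₁ * N₂) := by ring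
    _ ≤ _ := by gcongr
end

section
/- Let 0<p,q≤∞ and 0<p₀<p<p₁≤∞. There are constants C₁,C₂>0, depending only on p,q,p₀,p₁, such that for every Schwartz function f on ℝ, defining for each n∈ℤ the function aₙ(u)=f(n+u) for u∈[−1/2,1/2), one has C₁‖(‖aₙ‖_{L^{p₀}(𝕋)})_{n∈ℤ}‖_{ℓ^{p,q}(ℤ)} ≤ ‖f‖_{L^{p,q}(ℝ)} ≤ C₂‖(‖aₙ‖_{L^{p₁}(𝕋)})_{n∈ℤ}‖_{ℓ^{p,q}(ℤ)}. -/
open MeasureTheory Complex SchwartzMap Filter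
open scoped FourierTransform ENNReal NNReal Real

lemma scale_lintegral (φ : ℝ → ℝ≥0∞) (a : ℝ) (ha : 0 < a) :
    ENNReal.ofReal a * ∫⁻ t in Set.Ioi (0 : ℝ), φ (a * t) = ∫⁻ t in Set.Ioi (0 : ℝ), φ t := by
  have h := lintegral_image_eq_lintegral_abs_deriv_mul (s := Set.Ioi (0 : ℝ)) (f := fun t => a * t)
    (f' := fun _ => a) measurableSet_Ioi
    (fun x _ => by simpa using ((hasDerivAt_id x).const_mul a).hasDerivWithinAt)
    (fun x _ y _ h => mul_left_cancel₀ ha.ne' h) φ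
  rw [Set.image_mul_left_Ioi ha, mul_zero, abs_of_pos ha,
    lintegral_const_mul' _ _ ENNReal.ofReal_ne_top] at h
  exact h.symm

lemma tsum_le_sup (ρ : ℝ≥0∞) (h : ℕ → ℝ≥0∞) :
    ∑' k, ρ ^ k * h k ≤ (1 - ρ)⁻¹ * ⨆ k, h k := by
  rw [← ENNReal.tsum_geometric, ← ENNReal.tsum_mul_right]
  exact ENNReal.tsum_le_tsum fun k => by gcongr; exact le_iSup h k

lemma core_int (p Q : ℝ) (hp : 0 < p) (hQ : 0 < Q) (σ K : ℝ≥0∞)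
    (l : ℕ → ℝ) (hl : ∀ k, 0 < l k) (D E : ℝ → ℝ≥0∞) (hE : Antitone E)
    (h : ∀ t, 0 < t → D t ≤ K * ∑' k, (σ * σ) ^ k * (ENNReal.ofReal (l k) ^ p * E (l k * t))) :
    ∫⁻ t in Set.Ioi (0 : ℝ), ENNReal.ofReal (t ^ (Q - 1)) * D t ^ (Q / p) ≤
      ((K * (1 - σ)⁻¹) ^ (Q / p) * (1 - σ ^ (Q / p))⁻¹) *
      ∫⁻ t in Set.Ioi (0 : ℝ), ENNReal.ofReal (t ^ (Q - 1)) * E t ^ (Q / p) := by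
  have hr : 0 < Q / p := by positivity
  set r := Q / p with hrdef
  have hmE : Measurable E := hE.measurable
  have key : ∀ t, 0 < t → ENNReal.ofReal (t ^ (Q - 1)) * D t ^ r ≤
      (K * (1 - σ)⁻¹) ^ r * ∑' k, (σ ^ r) ^ k * (ENNReal.ofReal (l k) *
        (ENNReal.ofReal ((l k * t) ^ (Q - 1)) * E (l k * t) ^ r)) := by
    intro t ht
    have h1 : D t ≤ (K * (1 - σ)⁻¹) *
        ⨆ k, σ ^ k * (ENNReal.ofReal (l k) ^ p * E (l k * t)) := by
      refine (h t ht).trans ?_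
      rw [mul_assoc]
      gcongr
      refine le_trans (le_of_eq ?_) (tsum_le_sup σ _)
      congr 1; ext k; rw [mul_pow, mul_assoc]
    have h2 : D t ^ r ≤ (K * (1 - σ)⁻¹) ^ r *
        ∑' k, (σ ^ r) ^ k * (ENNReal.ofReal (l k) ^ Q * E (l k * t) ^ r) := by
      refine (ENNReal.rpow_le_rpow h1 hr.le).trans ?_
      rw [ENNReal.mul_rpow_of_nonneg _ _ hr.le]
      gcongr
      rw [← ENNReal.le_rpow_inv_iff hr]
      refine iSup_le fun k => ?_
      rw [ENNReal.le_rpow_inv_iff hr]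
      refine le_trans (le_of_eq ?_) (ENNReal.le_tsum k)
      rw [ENNReal.mul_rpow_of_nonneg _ _ hr.le, ENNReal.mul_rpow_of_nonneg _ _ hr.le,
        ← ENNReal.rpow_mul, ← ENNReal.rpow_natCast, ← ENNReal.rpow_natCast,
        ← ENNReal.rpow_mul, ← ENNReal.rpow_mul, mul_comm r]
      congr 3
      rw [hrdef]; field_simp
    calc _ ≤ ENNReal.ofReal (t ^ (Q - 1)) * _ := mul_le_mul' le_rfl h2
      _ = _ := by
        rw [mul_left_comm, ← ENNReal.tsum_mul_left]
        congr 2; ext k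
        have : ENNReal.ofReal (l k) * ENNReal.ofReal ((l k * t) ^ (Q - 1)) =
            ENNReal.ofReal (t ^ (Q - 1)) * ENNReal.ofReal (l k) ^ Q := by
          rw [ENNReal.ofReal_rpow_of_pos (hl k), ← ENNReal.ofReal_mul (hl k).le,
            ← ENNReal.ofReal_mul (by positivity), Real.mul_rpow (hl k).le ht.le]
          congr 1
          have : (l k) ^ Q = l k * l k ^ (Q - 1) := by
            rw [Real.rpow_sub_one (hl k).ne']; have := hl k; field_simp
          rw [this]; ring
        rw [← mul_assoc (ENNReal.ofReal (l k)), this]; ring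
  calc _ ≤ ∫⁻ t in Set.Ioi (0 : ℝ), (K * (1 - σ)⁻¹) ^ r * ∑' k, (σ ^ r) ^ k * (ENNReal.ofReal (l k) *
        (ENNReal.ofReal ((l k * t) ^ (Q - 1)) * E (l k * t) ^ r)) :=
        setLIntegral_mono' measurableSet_Ioi key
    _ = _ := by
      have hm : ∀ k, Measurable fun t => (ENNReal.ofReal ((l k * t) ^ (Q - 1)) * E (l k * t) ^ r) := by
        intro k; fun_prop
      rw [lintegral_const_mul _ (by fun_prop), lintegral_tsum (by fun_prop), mul_assoc]
      congr 1
      rw [← ENNReal.tsum_geometric, ← ENNReal.tsum_mul_right]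
      congr 1; ext k
      rw [lintegral_const_mul _ (by fun_prop), lintegral_const_mul _ (by fun_prop)]
      congr 1
      exact scale_lintegral (fun t => ENNReal.ofReal (t ^ (Q - 1)) * E t ^ r) _ (hl k)

lemma distFn_antitone {X : Type*} [MeasurableSpace X] (μ : Measure X) (f : X → ℝ≥0∞) :
    Antitone (distFn μ f) := fun _ _ hst =>
  measure_mono fun _ (hx : _ < _) => (ENNReal.ofReal_le_ofReal hst).trans_lt hx

lemma core (P q : ℝ≥0∞) (hP : 0 < P) (hP' : P ≠ ∞) (hq : 0 < q) (ρ K : ℝ≥0∞) (hρ : ρ < 1)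
    (hK : K ≠ ∞) :
    ∃ C : ℝ, 0 < C ∧ ∀ (X Y : Type) [MeasurableSpace X] [MeasurableSpace Y] (μ : Measure X)
      (ν : Measure Y) (F : X → ℝ≥0∞) (G : Y → ℝ≥0∞) (l : ℕ → ℝ), (∀ k, 0 < l k) →
      (∀ t, 0 < t → distFn μ F t ≤ K * ∑' k, ρ ^ k * (ENNReal.ofReal (l k) ^ P.toReal *
        distFn ν G (l k * t))) →
      lorentzNorm μ P q F ≤ ENNReal.ofReal C * lorentzNorm ν P q G := by
  have hp : 0 < P.toReal := ENNReal.toReal_pos hP.ne' hP'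
  set p := P.toReal with hpdef
  suffices H : ∃ C : ℝ≥0∞, C ≠ ∞ ∧ ∀ (X Y : Type) [MeasurableSpace X] [MeasurableSpace Y]
      (μ : Measure X)
      (ν : Measure Y) (F : X → ℝ≥0∞) (G : Y → ℝ≥0∞) (l : ℕ → ℝ), (∀ k, 0 < l k) →
      (∀ t, 0 < t → distFn μ F t ≤ K * ∑' k, ρ ^ k * (ENNReal.ofReal (l k) ^ p *
        distFn ν G (l k * t))) →
      lorentzNorm μ P q F ≤ C * lorentzNorm ν P q G by
    obtain ⟨C, hC, H⟩ := H
    refine ⟨C.toReal + 1, by positivity, fun X Y _ _ μ ν F G l hl h =>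
      (H X Y μ ν F G l hl h).trans ?_⟩
    gcongr
    rw [ENNReal.ofReal_add (by positivity) (by positivity), ENNReal.ofReal_toReal hC]
    exact le_self_add
  by_cases hqt : q = ∞
  · refine ⟨(K * (1 - ρ)⁻¹) ^ (1 / p), ?_, ?_⟩
    · refine ENNReal.rpow_ne_top_of_nonneg (by positivity) (ENNReal.mul_ne_top hK ?_)
      simpa [tsub_eq_zero_iff_le] using hρ
    intro X Y _ _ μ ν F G l hl h
    simp only [lorentzNorm, hqt, if_true, ← hpdef]
    refine iSup₂_le fun t (ht : 0 < t) => ?_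
    set S := ⨆ t ∈ Set.Ioi (0 : ℝ), ENNReal.ofReal t * distFn ν G t ^ (1 / p) with hS
    have h1 : ∀ k, ENNReal.ofReal (l k) ^ p * distFn ν G (l k * t) ≤
        (S / ENNReal.ofReal t) ^ p := by
      intro k
      have h2 : ENNReal.ofReal (l k * t) * distFn ν G (l k * t) ^ (1 / p) ≤ S :=
        le_iSup₂_of_le (l k * t) (mul_pos (hl k) ht) le_rfl
      rw [ENNReal.ofReal_mul (hl k).le, mul_right_comm] at h2
      have h3 := ENNReal.rpow_le_rpow ((ENNReal.le_div_iff_mul_le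
        (Or.inl (by simpa using ht)) (Or.inl ENNReal.ofReal_ne_top)).2 h2) hp.le
      rwa [ENNReal.mul_rpow_of_nonneg _ _ hp.le, ← ENNReal.rpow_mul, one_div,
        inv_mul_cancel₀ hp.ne', ENNReal.rpow_one] at h3
    have h4 : distFn μ F t ≤ (K * (1 - ρ)⁻¹) * (S / ENNReal.ofReal t) ^ p := by
      refine (h t ht).trans ?_
      rw [mul_assoc]
      gcongr
      refine (tsum_le_sup ρ _).trans ?_
      gcongr
      exact iSup_le h1
    have h5 := ENNReal.rpow_le_rpow h4 (z := 1 / p) (by positivity)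
    rw [ENNReal.mul_rpow_of_nonneg _ _ (by positivity), ← ENNReal.rpow_mul, one_div,
        mul_inv_cancel₀ hp.ne', ENNReal.rpow_one] at h5
    rw [one_div]
    calc _ ≤ ENNReal.ofReal t * _ := mul_le_mul' le_rfl h5
      _ = (K * (1 - ρ)⁻¹) ^ p⁻¹ * (ENNReal.ofReal t * (S / ENNReal.ofReal t)) := by ring
      _ = _ := by rw [ENNReal.mul_div_cancel (by simpa using ht) ENNReal.ofReal_ne_top]
  · have hQ : 0 < q.toReal := ENNReal.toReal_pos hq.ne' hqt
    set σ := ρ ^ (1 / 2 : ℝ) with hσ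
    have hσσ : σ * σ = ρ := by
      rw [hσ, ← ENNReal.rpow_add_of_nonneg _ _ (by norm_num) (by norm_num)]; norm_num
    have hσ1 : σ < 1 := ENNReal.rpow_lt_one hρ (by norm_num)
    refine ⟨((K * (1 - σ)⁻¹) ^ (q.toReal / p) * (1 - σ ^ (q.toReal / p))⁻¹) ^ (1 / q.toReal), ?_, ?_⟩
    · refine ENNReal.rpow_ne_top_of_nonneg (by positivity) (ENNReal.mul_ne_top
        (ENNReal.rpow_ne_top_of_nonneg (by positivity) (ENNReal.mul_ne_top hK ?_)) ?_)
      · simpa [tsub_eq_zero_iff_le] using hσ1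
      · have := ENNReal.rpow_lt_one hσ1 (z := q.toReal / p) (by positivity)
        simpa [tsub_eq_zero_iff_le] using this
    intro X Y _ _ μ ν F G l hl h
    simp only [lorentzNorm, hqt, if_false, ← hpdef]
    rw [← ENNReal.mul_rpow_of_nonneg _ _ (by positivity), mul_left_comm]
    gcongr
    exact core_int p q.toReal hp hQ σ K l hl _ _ (distFn_antitone ν G) (by rwa [hσσ])

noncomputable abbrev muI : Measure ℝ := volume.restrict (Set.Ico (-(1/2) : ℝ) (1/2))

lemma unfold_lintegral (G : ℝ → ℝ≥0∞) :
    ∫⁻ x, G x = ∑' n : ℤ, ∫⁻ u, G ((n : ℝ) + u) ∂muI := by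
  rw [← setLIntegral_univ, ← iUnion_Ico_add_intCast (-(1/2) : ℝ),
    lintegral_iUnion (fun _ => measurableSet_Ico) (Set.pairwise_disjoint_Ico_add_intCast _)]
  congr 1; ext n
  have := (measurePreserving_add_left volume (n : ℝ)).setLIntegral_comp_preimage_emb
    (measurableEmbedding_addLeft (n : ℝ)) G (Set.Ico (-(1/2) + n) (-(1/2) + n + 1))
  rw [← this, Set.preimage_const_add_Ico]
  congr 3 <;> ring

lemma unfold_measure (G : ℝ → ℝ≥0∞) (hG : Measurable G) (s : ℝ≥0∞) :
    volume {x | s < G x} = ∑' n : ℤ, muI {u | s < G ((n : ℝ) + u)} := by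
  have hm : MeasurableSet {x | s < G x} := measurableSet_lt measurable_const hG
  rw [← lintegral_indicator_one hm, unfold_lintegral]
  congr 1; ext n
  have hm' : MeasurableSet {u | s < G ((n : ℝ) + u)} :=
    measurableSet_lt measurable_const (hG.comp (measurable_const_add _))
  rw [← lintegral_indicator_one hm']
  rfl

instance : IsProbabilityMeasure muI := ⟨by
  rw [Measure.restrict_apply_univ, Real.volume_Ico]; norm_num⟩

lemma count_eq (A : ℤ → ℝ≥0∞) (s : ℝ≥0∞) :
    (Measure.count {n | s < A n} : ℝ≥0∞) = ∑' n, if s < A n then 1 else 0 := by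
  classical
  rw [← lintegral_indicator_one (MeasurableSet.of_discrete), lintegral_count]
  congr 1; ext n
  simp [Set.indicator_apply]

lemma exists_pow_ge (c : ℝ) (hc : 0 < c) (g : ℝ≥0∞) (hg : g ≠ ∞) :
    ∃ m : ℕ, g ≤ ENNReal.ofReal (c * 2 ^ m) := by
  obtain ⟨m, hm⟩ := pow_unbounded_of_one_lt (g.toReal / c) (one_lt_two)
  refine ⟨m, (ENNReal.le_ofReal_iff_toReal_le hg (by positivity)).2 ?_⟩
  rw [div_lt_iff₀ hc] at hm
  linarith

/-- layer cake, pointwise -/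
lemma layer (a : ℝ) (ha : 0 < a) (c : ℝ) (hc : 0 < c) (g : ℝ≥0∞) (hg : g ≠ ∞) :
    g ^ a ≤ ENNReal.ofReal c ^ a + ∑' k : ℕ, ENNReal.ofReal (c * 2 ^ (k + 1)) ^ a *
      (if ENNReal.ofReal (c * 2 ^ k) < g then 1 else 0) := by
  classical
  have h := exists_pow_ge c hc g hg
  have hs := Nat.find_spec h
  have hmin := fun m => Nat.find_min h (m := m)
  rcases hm : Nat.find h with _ | k
  · rw [hm] at hs
    refine le_trans ?_ le_self_add
    gcongr
    simpa using hs
  · rw [hm] at hs hmin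
    refine le_trans ?_ le_add_self
    refine le_trans ?_ (ENNReal.le_tsum k)
    rw [if_pos (not_le.1 (hmin k (Nat.lt_succ_self k))), mul_one]
    gcongr

lemma partA (a : ℝ) (ha : 0 < a) (G : ℝ → ℝ≥0∞) (hG : Measurable G) (hfin : ∀ x, G x ≠ ∞)
    (t : ℝ) (ht : 0 < t) (c : ℝ) (hc : 0 < c) (hc2 : c ^ a = 1 / 2) :
    distFn Measure.count (fun n : ℤ => (∫⁻ u, G (n + u) ^ a ∂muI) ^ (1 / a)) t ≤
      2 * ∑' k : ℕ, ENNReal.ofReal (c * 2 ^ (k + 1)) ^ a * distFn volume G (c * 2 ^ k * t) := by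
  have hct : 0 < c * t := by positivity
  set T := ENNReal.ofReal t ^ a with hT
  have hT0 : T ≠ 0 := by
    simp [hT, ENNReal.rpow_eq_zero_iff, ENNReal.ofReal_eq_zero, not_le.2 ht]
  have hTt : T ≠ ∞ := ENNReal.rpow_ne_top_of_nonneg ha.le ENNReal.ofReal_ne_top
  have hm : ∀ (n : ℤ) (k : ℕ), MeasurableSet {u | ENNReal.ofReal (c * 2 ^ k * t) < G ((n : ℝ) + u)} :=
    fun n k => measurableSet_lt measurable_const (hG.comp (measurable_const_add _))
  have h1 : ∀ n : ℤ, ∫⁻ u, G (n + u) ^ a ∂muI ≤ T * 2⁻¹ + T * ∑' k : ℕ,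
      ENNReal.ofReal (c * 2 ^ (k + 1)) ^ a *
        muI {u | ENNReal.ofReal (c * 2 ^ k * t) < G ((n : ℝ) + u)} := by
    intro n
    calc _ ≤ ∫⁻ u, (ENNReal.ofReal (c * t) ^ a + ∑' k : ℕ,
          ENNReal.ofReal (c * t * 2 ^ (k + 1)) ^ a *
          ({u | ENNReal.ofReal (c * 2 ^ k * t) < G ((n : ℝ) + u)}).indicator 1 u) ∂muI := by
          refine lintegral_mono fun u => ?_
          refine (layer a ha (c * t) hct _ (hfin _)).trans (le_of_eq ?_)
          congr 2; ext k
          congr 1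
          simp only [Set.indicator_apply, Set.mem_ofPred_eq, mul_right_comm c t]
          rfl
      _ = _ := by
        rw [lintegral_add_left measurable_const, lintegral_const, measure_univ, mul_one,
          lintegral_tsum, ← ENNReal.tsum_mul_left]
        · congr 1
          · rw [ENNReal.ofReal_mul hc.le, ENNReal.mul_rpow_of_nonneg _ _ ha.le,
              ENNReal.ofReal_rpow_of_pos hc, hc2, mul_comm]
            congr 1
            simp
          · congr 1; ext k
            rw [lintegral_const_mul _ (measurable_one.indicator (hm n k)),
              lintegral_indicator_one (hm n k), mul_right_comm c t, mul_comm _ t, ENNReal.ofReal_mul ht.le,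
              ENNReal.mul_rpow_of_nonneg _ _ ha.le, mul_assoc]
        · intro k
          exact ((measurable_one.indicator (hm n k)).const_mul _).aemeasurable
  have h2 : ∀ n : ℤ, (if ENNReal.ofReal t < (∫⁻ u, G (n + u) ^ a ∂muI) ^ (1 / a) then 1 else 0) ≤
      2 * ∑' k : ℕ, ENNReal.ofReal (c * 2 ^ (k + 1)) ^ a *
        muI {u | ENNReal.ofReal (c * 2 ^ k * t) < G ((n : ℝ) + u)} := by
    intro n
    split_ifs with h
    swap
    · exact zero_le
    have h3 : T < ∫⁻ u, G (n + u) ^ a ∂muI := by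
      rw [one_div] at h
      exact (ENNReal.lt_rpow_inv_iff ha).1 h
    have h4 := h3.le.trans (h1 n)
    rw [← mul_add] at h4
    have h5 : (1 : ℝ≥0∞) ≤ 2⁻¹ + ∑' k : ℕ,
      ENNReal.ofReal (c * 2 ^ (k + 1)) ^ a *
        muI {u | ENNReal.ofReal (c * 2 ^ k * t) < G ((n : ℝ) + u)} := by
      rw [← ENNReal.mul_le_mul_iff_right hT0 hTt, mul_one]; exact h4
    rw [← ENNReal.inv_two_add_inv_two] at h5
    have h6 := (ENNReal.add_le_add_iff_left (by simp)).1 h5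
    calc (1 : ℝ≥0∞) = 2 * 2⁻¹ := (ENNReal.mul_inv_cancel (by simp) (by simp)).symm
      _ ≤ _ := by gcongr
  rw [distFn, count_eq]
  refine (ENNReal.tsum_le_tsum h2).trans (le_of_eq ?_)
  rw [ENNReal.tsum_mul_left, ENNReal.tsum_comm]
  congr 2; ext k
  rw [ENNReal.tsum_mul_left, distFn, unfold_measure G hG]

lemma partB (b : ℝ≥0∞) (hb0 : b ≠ 0) (hbt : b ≠ ∞) (f : ℝ → ℂ) (hf : Continuous f)
    (t : ℝ) (ht : 0 < t) :
    distFn volume (fun x => (‖f x‖₊ : ℝ≥0∞)) t ≤ 2 ^ b.toReal *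
      ∑' k : ℕ, ENNReal.ofReal ((1 / 2) ^ k) ^ b.toReal *
        distFn Measure.count (fun n : ℤ => eLpNorm (fun u : ℝ => f ((n : ℝ) + u)) b muI)
          ((1 / 2) ^ k * t) := by
  classical
  have hb : 0 < b.toReal := ENNReal.toReal_pos hb0 hbt
  set B := fun n : ℤ => eLpNorm (fun u : ℝ => f ((n : ℝ) + u)) b muI with hB
  have hT0 : ENNReal.ofReal t ≠ 0 := by simpa using ht
  have h1 : ∀ n : ℤ, muI {u | ENNReal.ofReal t < ‖f ((n : ℝ) + u)‖ₑ} ≤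
      ((ENNReal.ofReal t)⁻¹ * B n) ^ b.toReal := by
    intro n
    have := meas_ge_le_mul_pow_eLpNorm_enorm muI hb0 hbt (f := fun u : ℝ => f ((n : ℝ) + u))
      (by fun_prop) (ε := ENNReal.ofReal t) hT0 (by simp)
    rw [ENNReal.mul_rpow_of_nonneg _ _ hb.le]
    refine le_trans (measure_mono ?_) this
    intro u hu
    rw [Set.mem_ofPred_eq] at hu ⊢
    exact hu.le
  have h2 : ∀ n : ℤ, muI {u | ENNReal.ofReal t < ‖f ((n : ℝ) + u)‖ₑ} ≤ 2 ^ b.toReal *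
      ∑' k : ℕ, ENNReal.ofReal ((1 / 2) ^ k) ^ b.toReal *
        (if ENNReal.ofReal ((1 / 2) ^ k * t) < B n then 1 else 0) := by
    intro n
    by_cases h0 : B n = 0
    · refine (h1 n).trans ?_
      rw [h0, mul_zero, ENNReal.zero_rpow_of_pos hb]; exact zero_le
    have hex : ∃ k : ℕ, ENNReal.ofReal ((1 / 2) ^ k * t) < B n := by
      have hlim : Tendsto (fun k : ℕ => ENNReal.ofReal ((1 / 2) ^ k * t)) atTop (nhds 0) := by
        have := (tendsto_pow_atTop_nhds_zero_of_lt_one (r := (1 / 2 : ℝ)) (by norm_num)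
          (by norm_num)).mul_const t
        simpa using ENNReal.tendsto_ofReal this
      exact (hlim.eventually (gt_mem_nhds (pos_iff_ne_zero.2 h0))).exists
    have hs := Nat.find_spec hex
    have hmin := fun m => Nat.find_min hex (m := m)
    refine le_trans ?_ (mul_le_mul' le_rfl (ENNReal.le_tsum (Nat.find hex)))
    rw [if_pos hs, mul_one]
    rcases hm : Nat.find hex with _ | k
    · refine prob_le_one.trans ?_
      simp only [pow_zero, ENNReal.ofReal_one, ENNReal.one_rpow, mul_one]
      exact ENNReal.one_le_rpow (by norm_num) hb
    · rw [hm] at hmin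
      have h3 := not_lt.1 (hmin k (Nat.lt_succ_self k))
      refine (h1 n).trans ?_
      rw [← ENNReal.mul_rpow_of_nonneg _ _ hb.le]
      refine ENNReal.rpow_le_rpow ?_ hb.le
      calc _ ≤ (ENNReal.ofReal t)⁻¹ * ENNReal.ofReal ((1 / 2) ^ k * t) := by gcongr
        _ = ENNReal.ofReal ((1 / 2) ^ k) := by
          rw [ENNReal.ofReal_mul (by positivity), mul_left_comm,
            ENNReal.inv_mul_cancel hT0 ENNReal.ofReal_ne_top, mul_one]
        _ = _ := by
          rw [show (2 : ℝ≥0∞) = ENNReal.ofReal 2 by simp, ← ENNReal.ofReal_mul (by norm_num)]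
          congr 1; rw [pow_succ]; ring
  rw [distFn, unfold_measure _ (by fun_prop)]
  refine (ENNReal.tsum_le_tsum h2).trans (le_of_eq ?_)
  rw [ENNReal.tsum_mul_left, ENNReal.tsum_comm]
  congr 2; ext k
  rw [ENNReal.tsum_mul_left, distFn, count_eq]

lemma lorentz_mono {X : Type*} [MeasurableSpace X] (μ : Measure X) (p q : ℝ≥0∞)
    (F G : X → ℝ≥0∞) (h : ∀ x, F x ≤ G x) : lorentzNorm μ p q F ≤ lorentzNorm μ p q G := by
  have hd : ∀ t, distFn μ F t ≤ distFn μ G t := fun t =>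
    measure_mono fun x (hx : _ < _) => hx.trans_le (h x)
  unfold lorentzNorm
  split_ifs
  · exact iSup₂_mono fun t _ => by gcongr; exact hd t
  · gcongr with t; exact hd t

lemma upper (p q p₁ : ℝ≥0∞) (hp : 0 < p) (hq : 0 < q) (h₁ : p < p₁) :
    ∃ C₂ : ℝ, 0 < C₂ ∧ ∀ f : 𝓢(ℝ, ℂ), lorentzNormC volume p q (fun x => f x)
        ≤ ENNReal.ofReal C₂ * lorentzNorm Measure.count p q
            (fun n : ℤ => eLpNorm (fun u : ℝ => f ((n : ℝ) + u)) p₁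
              (volume.restrict (Set.Ico (-(1/2) : ℝ) (1/2)))) := by
  obtain ⟨b, hpb, hb1⟩ := exists_between h₁
  have hbt : b ≠ ∞ := hb1.ne_top
  have hpt : p ≠ ∞ := hpb.ne_top
  have hlt : p.toReal < b.toReal := (ENNReal.toReal_lt_toReal hpt hbt).2 hpb
  set ρ := ENNReal.ofReal (1 / 2) ^ (b.toReal - p.toReal) with hρ
  have hρ1 : ρ < 1 := ENNReal.rpow_lt_one (by simp) (by linarith)
  obtain ⟨C, hC, H⟩ := core p q hp hpt hq ρ (2 ^ b.toReal) hρ1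
    (ENNReal.rpow_ne_top_of_nonneg (by positivity) (by simp))
  refine ⟨C, hC, fun f => ?_⟩
  refine (H ℝ ℤ volume Measure.count _
    (fun n : ℤ => eLpNorm (fun u : ℝ => f ((n : ℝ) + u)) b muI) (fun k => (1 / 2) ^ k) (fun k => by positivity)
    (fun t ht => (partB b (hp.trans hpb).ne' hbt f f.continuous t ht).trans (le_of_eq ?_))).trans ?_
  · congr 2; ext k
    rw [← mul_assoc]
    congr 1
    rw [hρ, ENNReal.ofReal_pow (by norm_num)]
    simp only [← ENNReal.rpow_natCast, ← ENNReal.rpow_mul]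
    rw [← ENNReal.rpow_add _ _ (by simp) (by simp)]
    congr 1; ring
  · gcongr
    exact lorentz_mono _ _ _ _ _ fun n =>
      eLpNorm_le_eLpNorm_of_exponent_le (μ := muI) hb1.le (by
        have := f.continuous; fun_prop)

lemma lower (p q p₀ : ℝ≥0∞) (hp₀ : 0 < p₀) (hq : 0 < q) (h₀ : p₀ < p) (hpt : p ≠ ∞) :
    ∃ C₁ : ℝ, 0 < C₁ ∧ ∀ f : 𝓢(ℝ, ℂ), ENNReal.ofReal C₁ * lorentzNorm Measure.count p q
          (fun n : ℤ => eLpNorm (fun u : ℝ => f ((n : ℝ) + u)) p₀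
            (volume.restrict (Set.Ico (-(1/2) : ℝ) (1/2))))
        ≤ lorentzNormC volume p q (fun x => f x) := by
  have h0t : p₀ ≠ ∞ := h₀.ne_top
  have ha : 0 < p₀.toReal := ENNReal.toReal_pos hp₀.ne' h0t
  have hlt : p₀.toReal < p.toReal := (ENNReal.toReal_lt_toReal h0t hpt).2 h₀
  set a := p₀.toReal with hadef
  set c : ℝ := (1 / 2) ^ (1 / a) with hcdef
  have hc : 0 < c := by positivity
  have hc2 : c ^ a = 1 / 2 := by
    rw [hcdef, ← Real.rpow_mul (by norm_num), one_div_mul_cancel ha.ne', Real.rpow_one]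
  set ρ := ENNReal.ofReal 2 ^ (a - p.toReal) with hρ
  have hρ1 : ρ < 1 := ENNReal.rpow_lt_one_of_one_lt_of_neg (by simp) (by linarith)
  set K := 2 * (ENNReal.ofReal 2 ^ a * ENNReal.ofReal c ^ (a - p.toReal)) with hK
  obtain ⟨C, hC, H⟩ := core p q (hp₀.trans h₀) hpt hq ρ K hρ1 (by
    refine ENNReal.mul_ne_top (by simp) (ENNReal.mul_ne_top ?_ ?_)
    · exact ENNReal.rpow_ne_top_of_nonneg ha.le ENNReal.ofReal_ne_top
    · rw [ENNReal.ofReal_rpow_of_pos hc]; exact ENNReal.ofReal_ne_top)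
  refine ⟨C⁻¹, inv_pos.2 hC, fun f => ?_⟩
  rw [ENNReal.ofReal_inv_of_pos hC, mul_comm, ← div_eq_mul_inv]
  refine ENNReal.div_le_of_le_mul' ?_
  refine H ℤ ℝ Measure.count volume _ _ (fun k => c * 2 ^ k) (fun k => by positivity)
    (fun t ht => ?_)
  have hfc := f.continuous
  have hA := partA a ha (fun x => (‖f x‖₊ : ℝ≥0∞)) (by fun_prop) (by simp) t ht c hc hc2
  have hE : (fun n : ℤ => eLpNorm (fun u : ℝ => f ((n : ℝ) + u)) p₀
            (volume.restrict (Set.Ico (-(1/2) : ℝ) (1/2)))) =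
      (fun n : ℤ => (∫⁻ u, (‖f (n + u)‖₊ : ℝ≥0∞) ^ a ∂muI) ^ (1 / a)) := by
    ext n
    rw [eLpNorm_eq_lintegral_rpow_enorm_toReal hp₀.ne' h0t]
    rfl
  rw [hE]
  refine hA.trans (le_of_eq ?_)
  rw [hK, mul_assoc, ← ENNReal.tsum_mul_left (a := ENNReal.ofReal 2 ^ a * _)]
  congr 2; ext k
  rw [← mul_assoc, ← mul_assoc]
  congr 1
  rw [hρ, pow_succ, ← mul_assoc, ENNReal.ofReal_mul (by positivity), ENNReal.ofReal_mul hc.le,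
    ENNReal.ofReal_pow (by norm_num), ENNReal.mul_rpow_of_nonneg _ _ ha.le,
    ENNReal.mul_rpow_of_nonneg _ _ ha.le, ENNReal.mul_rpow_of_nonneg _ _ (ha.trans hlt).le]
  simp only [← ENNReal.rpow_natCast, ← ENNReal.rpow_mul]
  have e1 : ENNReal.ofReal c ^ a = ENNReal.ofReal c ^ (a - p.toReal) * ENNReal.ofReal c ^ p.toReal := by
    rw [← ENNReal.rpow_add _ _ (by simpa using hc) (by simp)]; congr 1; ring
  have e2 : ENNReal.ofReal 2 ^ (k * a) = ENNReal.ofReal 2 ^ ((a - p.toReal) * k) *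
      ENNReal.ofReal 2 ^ (k * p.toReal) := by
    rw [← ENNReal.rpow_add _ _ (by simp) (by simp)]; congr 1; ring
  rw [e1, e2]; ring

/-- Relationship on average: the Lorentz norm of a Schwartz function is squeezed between the
`ℓ^{p,q}(ℤ)` norms of the sequences of local `L^{p₀}` and `L^{p₁}` norms on unit intervals. -/
theorem stmt2 (p q p₀ p₁ : ℝ≥0∞) (hp : 0 < p) (hq : 0 < q)
    (hp₀ : 0 < p₀) (h₀ : p₀ < p) (h₁ : p < p₁) :
    ∃ C₁ C₂ : ℝ, 0 < C₁ ∧ 0 < C₂ ∧ ∀ f : 𝓢(ℝ, ℂ),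
      (ENNReal.ofReal C₁ * lorentzNorm Measure.count p q
          (fun n : ℤ => eLpNorm (fun u : ℝ => f ((n : ℝ) + u)) p₀
            (volume.restrict (Set.Ico (-(1/2) : ℝ) (1/2))))
        ≤ lorentzNormC volume p q (fun x => f x)) ∧
      lorentzNormC volume p q (fun x => f x)
        ≤ ENNReal.ofReal C₂ * lorentzNorm Measure.count p q
            (fun n : ℤ => eLpNorm (fun u : ℝ => f ((n : ℝ) + u)) p₁
              (volume.restrict (Set.Ico (-(1/2) : ℝ) (1/2)))) := by
  obtain ⟨C₁, hC₁, H₁⟩ := lower p q p₀ hp₀ hq h₀ h₁.ne_top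
  obtain ⟨C₂, hC₂, H₂⟩ := upper p q p₁ hp hq h₁
  exact ⟨C₁, C₂, hC₁, hC₂, fun f => ⟨H₁ f, H₂ f⟩⟩
end

section
/- Let ψ be a Schwartz function on ℝ with ψ̂(x)=1 for all x∈[−1,1] and supp ψ̂⊂[−2,2]. There exists a constant C>0, depending only on ψ, such that for every R>0, with M=max(1,R), every 0<r≤1, and every f∈E_R, one has |f(x)|^r ≤ C ∫_ℝ |f(x−y)|^r · M|ψ(My)|^r dy for all x∈ℝ. -/
open MeasureTheory Complex SchwartzMap Filter
open scoped FourierTransform ENNReal NNReal Real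

/-- Polynomial growth. -/
def PolyGr (f : ℝ → ℂ) : Prop :=
  Continuous f ∧ (∃ (C : ℝ) (k : ℕ), ∀ x : ℝ, ‖f x‖ ≤ C * (1 + |x|) ^ k)

/-- Translation-invariant form of the band-limited condition. -/
def Band (R : ℝ) (f : ℝ → ℂ) : Prop :=
  ∀ (x : ℝ) (h : 𝓢(ℝ, ℂ)) (T : ℝ), R < T → (∀ ξ : ℝ, |ξ| ≤ T → 𝓕 (h : ℝ → ℂ) ξ = 0) →
    ∫ y : ℝ, f (x - y) * h y = 0

lemma exists_aff (ψ : 𝓢(ℝ, ℂ)) (a b : ℝ) (ha : a ≠ 0) :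
    ∃ g : 𝓢(ℝ, ℂ), ∀ y, g y = ψ (a * y + b) := by
  refine ⟨SchwartzMap.compCLMOfContinuousLinearEquiv ℂ
    (ContinuousLinearEquiv.unitsEquivAut ℝ (Units.mk0 a ha))
    (SchwartzMap.compSubConstCLM ℂ (-b) ψ), fun y => ?_⟩
  simp [mul_comm]

lemma fourier_aff (ψ : ℝ → ℂ) (a b : ℝ) (ha : a ≠ 0) (ξ : ℝ) :
    𝓕 (fun y : ℝ => ψ (a * y + b)) ξ =
      (|a|⁻¹ : ℝ) * (Complex.exp (2 * π * b * ξ / a * Complex.I) * 𝓕 ψ (ξ / a)) := by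
  rw [Real.fourier_real_eq_integral_exp_smul, Real.fourier_real_eq_integral_exp_smul]
  have h2 : ∀ F : ℝ → ℂ, ∫ y, F (a * y + b) = (|a|⁻¹ : ℝ) * ∫ u, F u := by
    intro F
    rw [Measure.integral_comp_mul_left (fun u => F (u + b)) a, integral_add_right_eq_self F b]
    simp
  have h3 := h2 (fun u : ℝ => Complex.exp (↑(-2 * π * ((u - b)/a) * ξ) * Complex.I) • ψ u)
  have h4 : ∀ y : ℝ, (a * y + b - b) / a = y := fun y => by field_simp; ring
  simp only [h4] at h3
  rw [h3]
  congr 1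
  · rw [← integral_const_mul]
    congr 1
    ext u
    simp only [smul_eq_mul]
    rw [← mul_assoc, ← Complex.exp_add]
    congr 2
    push_cast
    have : (a : ℂ) ≠ 0 := by exact_mod_cast ha
    field_simp
    ring

lemma fourier_mul_schwartz (u h g : 𝓢(ℝ, ℂ)) (hg : ∀ y, g y = u y * h y) (ξ : ℝ) :
    𝓕 (g : ℝ → ℂ) ξ = ∫ t, 𝓕 (u : ℝ → ℂ) (-t) * 𝓕 (h : ℝ → ℂ) (ξ + t) := by
  have e : g = 𝓕 (SchwartzMap.convolution (ContinuousLinearMap.mul ℂ ℂ) (𝓕⁻ u) (𝓕⁻ h)) := by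
    rw [SchwartzMap.fourier_convolution]
    ext y
    simp [hg]
  have e2 : 𝓕⁻ g = SchwartzMap.convolution (ContinuousLinearMap.mul ℂ ℂ) (𝓕⁻ u) (𝓕⁻ h) := by
    rw [e]; simp
  have e3 : 𝓕 (g : ℝ → ℂ) ξ = (𝓕⁻ g : 𝓢(ℝ, ℂ)) (-ξ) := by
    rw [SchwartzMap.fourierInv_coe, Real.fourierInv_eq_fourier_neg, neg_neg]
  rw [e3, e2, SchwartzMap.convolution_apply, MeasureTheory.convolution_def]
  congr 1
  ext t
  rw [SchwartzMap.fourierInv_coe, Real.fourierInv_eq_fourier_neg, SchwartzMap.fourierInv_coe,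
    Real.fourierInv_eq_fourier_neg]
  simp [add_comm]

lemma exists_mul (u h : 𝓢(ℝ, ℂ)) : ∃ g : 𝓢(ℝ, ℂ), ∀ y, g y = u y * h y :=
  ⟨SchwartzMap.pairing (ContinuousLinearMap.mul ℂ ℂ) u h, fun y => by simp⟩

lemma band_of_inER {R : ℝ} {f : ℝ → ℂ} (hf : InER R f) : Band R f := by
  intro x h T hT hh
  obtain ⟨g, hg⟩ := exists_aff h (-1) x (by norm_num)
  have key := hf.2.2 (𝓕⁻ g) ?_
  · rw [← SchwartzMap.fourier_coe] at key
    rw [← integral_sub_left_eq_self _ volume x]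
    convert key using 2
    ext y
    simp [hg]
    ring_nf
    simp
  · have hz : ∀ ξ : ℝ, |ξ| ≤ T → (𝓕⁻ g : 𝓢(ℝ, ℂ)) ξ = 0 := by
      intro ξ hξ
      rw [SchwartzMap.fourierInv_coe, Real.fourierInv_eq_fourier_neg]
      have : (g : ℝ → ℂ) = fun y => h (-1 * y + x) := funext hg
      rw [this, fourier_aff _ _ _ (by norm_num), hh _ (by simpa using hξ)]
      simp
    rw [Set.disjoint_left]
    intro ξ h1 h2
    have hsub : tsupport ((𝓕⁻ g : 𝓢(ℝ, ℂ)) : ℝ → ℂ) ⊆ {ξ | T ≤ |ξ|} := by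
      apply closure_minimal
      · intro η hη
        by_contra hc
        exact hη (hz η (by simpa using (not_le.1 hc).le))
      · exact isClosed_le continuous_const continuous_abs
    have h3 : T ≤ |ξ| := hsub h1
    have h4 : |ξ| ≤ R := abs_le.2 h2
    linarith

lemma integrable_growth (ψ : 𝓢(ℝ, ℂ)) (k : ℕ) :
    Integrable (fun y : ℝ => (1 + |y|) ^ k * ‖ψ y‖) := by
  have h1 : Integrable (fun y : ℝ => 2 ^ (k-1) * (‖y‖ ^ 0 * ‖ψ y‖ + ‖y‖ ^ k * ‖ψ y‖)) :=
    ((ψ.integrable_pow_mul volume 0).add (ψ.integrable_pow_mul volume k)).const_mul _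
  refine h1.mono' ?_ ?_
  · exact (Continuous.aestronglyMeasurable (by fun_prop))
  · refine Eventually.of_forall fun y => ?_
    have := add_pow_le zero_le_one (abs_nonneg y) k
    rw [Real.norm_of_nonneg (by positivity)]
    calc _ ≤ (2 ^ (k-1) * (1 ^ k + |y| ^ k)) * ‖ψ y‖ := by gcongr
      _ = _ := by simp; ring

lemma polyGr_bound {f : ℝ → ℂ} (hf : PolyGr f) (A x : ℝ) (hA : 0 ≤ A) :
    ∃ (C : ℝ) (k : ℕ), 0 ≤ C ∧ ∀ s y : ℝ, |s| ≤ A → ‖f (x - s * y)‖ ≤ C * (1 + |y|) ^ k := by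
  obtain ⟨C, k, h⟩ := hf.2
  have hC : 0 ≤ C := by
    have := (norm_nonneg _).trans (h 0)
    simpa using this
  refine ⟨C * (1 + |x| + A) ^ k, k, by positivity, fun s y hs => (h _).trans ?_⟩
  rw [mul_assoc, ← mul_pow]
  gcongr
  have h1 : |x - s * y| ≤ |x| + A * |y| := by
    refine (abs_sub _ _).trans ?_
    rw [abs_mul]
    gcongr
  nlinarith [abs_nonneg x, abs_nonneg y, mul_nonneg (abs_nonneg x) (abs_nonneg y)]

lemma integrable_mul {f : ℝ → ℂ} (hf : PolyGr f) (ψ : 𝓢(ℝ, ℂ)) (x : ℝ) :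
    Integrable (fun y => f (x - y) * ψ y) := by
  obtain ⟨C, k, hC, h⟩ := polyGr_bound hf 1 x zero_le_one
  refine ((integrable_growth ψ k).const_mul C).mono' ?_ ?_
  · have := hf.1
    exact (Continuous.aestronglyMeasurable (by fun_prop))
  · refine Eventually.of_forall fun y => ?_
    have := h 1 y (by simp)
    rw [one_mul] at this
    rw [norm_mul, ← mul_assoc]
    gcongr

lemma polyGr_mul {f : ℝ → ℂ} (hf : PolyGr f) (ψ : 𝓢(ℝ, ℂ)) (x : ℝ) :
    PolyGr (fun y => f (x - y) * ψ y) := by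
  obtain ⟨C, k, hC, h⟩ := polyGr_bound hf 1 x zero_le_one
  refine ⟨by have := hf.1; fun_prop, C * SchwartzMap.seminorm ℝ 0 0 ψ, k, fun y => ?_⟩
  have := h 1 y (by simp)
  rw [one_mul] at this
  rw [norm_mul, mul_right_comm]
  have := SchwartzMap.norm_le_seminorm ℝ ψ y
  gcongr

lemma band_mul {R S : ℝ} {f : ℝ → ℂ} (hf : Band R f) (u : 𝓢(ℝ, ℂ))
    (hu : ∀ ξ : ℝ, S < |ξ| → 𝓕 (u : ℝ → ℂ) ξ = 0) (x : ℝ) :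
    Band (R + S) (fun y => f (x - y) * u y) := by
  intro z h T hT hh
  obtain ⟨g1, hg1⟩ := exists_aff u 1 z (by norm_num)
  obtain ⟨g2, hg2⟩ := exists_aff h (-1) 0 (by norm_num)
  obtain ⟨g, hg⟩ := exists_mul g1 g2
  have key := hf (x - z) g (T - S) (by linarith) ?_
  · rw [← integral_neg_eq_self]
    convert key using 2
    ext y
    rw [hg, hg1, hg2]
    ring_nf
  · intro ξ hξ
    rw [fourier_mul_schwartz g1 g2 g hg]
    refine integral_eq_zero_of_ae (Eventually.of_forall fun t => ?_)
    have e1 : (g1 : ℝ → ℂ) = fun y => u (1 * y + z) := funext hg1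
    have e2 : (g2 : ℝ → ℂ) = fun y => h (-1 * y + 0) := funext hg2
    simp only [e1, e2]
    rw [fourier_aff u 1 z (by norm_num), fourier_aff h (-1) 0 (by norm_num)]
    by_cases ht : S < |t|
    · rw [hu (-t / 1) (by simpa using ht)]
      simp
    · rw [hh ((ξ + t) / -1) ?_]
      · simp
      · rw [abs_div]
        simp only [abs_neg, abs_one, div_one]
        have := abs_add_le ξ t
        linarith

lemma reproduce {R : ℝ} (hR : 0 < R) {f : ℝ → ℂ} (hp : PolyGr f) (hf : Band R f) (ψ : 𝓢(ℝ, ℂ))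
    (hψ1 : ∀ x ∈ Set.Icc (-1 : ℝ) 1, 𝓕 (ψ : ℝ → ℂ) x = 1) (M : ℝ) (hM : R ≤ M) (x : ℝ) :
    f x = ∫ y, f (x - y) * (M * ψ (M * y)) := by
  have hM0 : 0 < M := hR.trans_le hM
  set J : ℝ → ℂ := fun s => ∫ y, f (x - s * y) * ψ y with hJ
  -- continuity of `J`
  have hJc : Continuous J := by
    rw [continuous_iff_continuousAt]
    intro s₀
    obtain ⟨C, k, hC, h⟩ := polyGr_bound hp (|s₀| + 1) x (by positivity)
    refine continuousAt_of_dominated (bound := fun y => C * ((1 + |y|) ^ k * ‖ψ y‖)) ?_ ?_ ?_ ?_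
    · refine Eventually.of_forall fun s => ?_
      have := hp.1
      exact Continuous.aestronglyMeasurable (by fun_prop)
    · have : ∀ᶠ s in nhds s₀, |s| < |s₀| + 1 :=
        continuous_abs.continuousAt.eventually_lt continuousAt_const (by simp)
      filter_upwards [this] with s hs
      refine Eventually.of_forall fun y => ?_
      rw [norm_mul, ← mul_assoc]
      have := h s y hs.le
      gcongr
    · exact (integrable_growth ψ k).const_mul C
    · refine Eventually.of_forall fun y => ?_
      have := hp.1
      fun_prop
  have hJ0 : J 0 = f x := by
    have h0 := hψ1 0 (by simp)
    rw [Real.fourier_real_eq_integral_exp_smul] at h0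
    simp only [hJ, zero_mul, sub_zero, integral_const_mul]
    simp at h0
    rw [h0, mul_one]
  have hJs : ∀ l : ℝ, 0 < l → J l⁻¹ = ∫ y, f (x - y) * (l * ψ (l * y)) := by
    intro l hl
    have := Measure.integral_comp_mul_left (fun y => f (x - l⁻¹ * y) * ψ y) l
    have e : ∀ y, l⁻¹ * (l * y) = y := fun y => by field_simp
    simp only [e, abs_of_pos (inv_pos.2 hl)] at this
    have h2 : ∫ y, f (x - y) * (l * ψ (l * y)) = l * ∫ y, f (x - y) * ψ (l * y) := by
      rw [← integral_const_mul]
      congr 1; ext y; ring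
    rw [h2, this]
    have : (l : ℂ) ≠ 0 := by exact_mod_cast hl.ne'
    simp [hJ, this]
  have hconst : ∀ l m : ℝ, R < l → l ≤ m → J l⁻¹ = J m⁻¹ := by
    intro l m hl hlm
    have hl0 : 0 < l := hR.trans hl
    have hm0 : 0 < m := hl0.trans_le hlm
    obtain ⟨g1, hg1⟩ := exists_aff ψ l 0 hl0.ne'
    obtain ⟨g2, hg2⟩ := exists_aff ψ m 0 hm0.ne'
    have key := hf x ((l : ℂ) • g1 + (-(m : ℂ)) • g2) l hl ?_
    · rw [hJs l hl0, hJs m hm0, ← sub_eq_zero, ← integral_sub]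
      · rw [← key]
        congr 1; ext y
        simp [hg1, hg2]
        ring
      · have := integrable_mul hp ((l : ℂ) • g1) x
        simpa [hg1] using this
      · have := integrable_mul hp ((m : ℂ) • g2) x
        simpa [hg2] using this
    · intro ξ hξ
      have e1 : (g1 : ℝ → ℂ) = fun y => ψ (l * y + 0) := funext hg1
      have e2 : (g2 : ℝ → ℂ) = fun y => ψ (m * y + 0) := funext hg2
      have q1 : 𝓕 (g1 : ℝ → ℂ) ξ = (l⁻¹ : ℝ) := by
        rw [e1, fourier_aff _ _ _ hl0.ne', hψ1, abs_of_pos hl0]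
        · simp
        · rw [Set.mem_Icc, ← abs_le, abs_div, abs_of_pos hl0]
          exact (div_le_one hl0).2 hξ
      have q2 : 𝓕 (g2 : ℝ → ℂ) ξ = (m⁻¹ : ℝ) := by
        rw [e2, fourier_aff _ _ _ hm0.ne', hψ1, abs_of_pos hm0]
        · simp
        · rw [Set.mem_Icc, ← abs_le, abs_div, abs_of_pos hm0]
          exact (div_le_one hm0).2 (hξ.trans hlm)
      rw [← SchwartzMap.fourier_coe, FourierTransform.fourier_add, FourierTransform.fourier_smul,
        FourierTransform.fourier_smul]
      have hl' : (l : ℂ) ≠ 0 := by exact_mod_cast hl0.ne'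
      have hm' : (m : ℂ) ≠ 0 := by exact_mod_cast hm0.ne'
      simp only [SchwartzMap.add_apply, SchwartzMap.smul_apply, SchwartzMap.fourier_coe, q1, q2]
      simp [hl', hm']
  have hval : ∀ l : ℝ, R < l → J l⁻¹ = f x := by
    intro l hl
    have t1 : Tendsto (fun m : ℝ => J m⁻¹) atTop (nhds (J 0)) :=
      (hJc.tendsto 0).comp tendsto_inv_atTop_zero
    have t2 : Tendsto (fun m : ℝ => J m⁻¹) atTop (nhds (J l⁻¹)) := by
      refine tendsto_const_nhds.congr' ?_
      filter_upwards [eventually_ge_atTop l] with m hm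
      exact hconst l m hl hm
    rw [← hJ0]
    exact tendsto_nhds_unique t2 t1
  rw [← hJs M hM0]
  have t1 : Tendsto (fun m : ℝ => J m⁻¹) (nhdsWithin M (Set.Ioi M)) (nhds (J M⁻¹)) :=
    (hJc.tendsto _).comp ((tendsto_inv₀ hM0.ne').mono_left nhdsWithin_le_nhds)
  have t2 : Tendsto (fun m : ℝ => J m⁻¹) (nhdsWithin M (Set.Ioi M)) (nhds (f x)) := by
    refine tendsto_const_nhds.congr' ?_
    filter_upwards [self_mem_nhdsWithin] with m hm
    exact (hval m (hM.trans_lt hm)).symm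
  exact tendsto_nhds_unique t2 t1

/-- Pointwise domination for powers of exponential type functions: for `f ∈ E_R`, `0 < r ≤ 1`
and `M = max(1, R)`, one has `|f(x)|^r ≤ C ∫ |f(x−y)|^r · M|ψ(My)|^r dy`. -/
theorem stmt4 (ψ : 𝓢(ℝ, ℂ))
    (hψ1 : ∀ x ∈ Set.Icc (-1 : ℝ) 1, 𝓕 (ψ : ℝ → ℂ) x = 1)
    (hψ2 : tsupport (𝓕 (ψ : ℝ → ℂ)) ⊆ Set.Icc (-2 : ℝ) 2) :
    ∃ C : ℝ, 0 < C ∧ ∀ R : ℝ, 0 < R → ∀ r : ℝ, 0 < r → r ≤ 1 →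
      ∀ f : ℝ → ℂ, InER R f → ∀ x : ℝ,
        (‖f x‖₊ : ℝ≥0∞) ^ r ≤ ENNReal.ofReal C *
          ∫⁻ y : ℝ, (‖f (x - y)‖₊ : ℝ≥0∞) ^ r *
            ENNReal.ofReal (max 1 R * ‖ψ (max 1 R * y)‖ ^ r) := by

  set B : ℝ := SchwartzMap.seminorm ℝ 0 0 ψ with hB
  have hBb : ∀ y, ‖ψ y‖ ≤ B := fun y => SchwartzMap.norm_le_seminorm ℝ ψ y
  have hB0 : 0 ≤ B := (norm_nonneg _).trans (hBb 0)
  refine ⟨max 1 (4 * B), by positivity, ?_⟩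
  intro R hR r hr0 hr1 f hf x
  set M : ℝ := max 1 R with hMdef
  have hRM : R ≤ M := le_max_right _ _
  have hM0 : 0 < M := hR.trans_le hRM
  have hp : PolyGr f := ⟨hf.1, hf.2.1⟩
  have hb : Band R f := band_of_inER hf
  obtain ⟨g, hg⟩ := exists_aff ψ M 0 hM0.ne'
  obtain ⟨u, hu⟩ : ∃ u : 𝓢(ℝ, ℂ), ∀ y, u y = M * ψ (M * y) :=
    ⟨(M : ℂ) • g, fun y => by simp [hg]⟩
  have huF : ∀ ξ : ℝ, 2 * M < |ξ| → 𝓕 (u : ℝ → ℂ) ξ = 0 := by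
    intro ξ hξ
    have e : (u : ℝ → ℂ) = fun y => (fun v => (M : ℂ) * ψ v) (M * y + 0) := by
      ext y; simp [hu]
    rw [e, fourier_aff (fun v => (M : ℂ) * ψ v) M 0 hM0.ne']
    have : 𝓕 (fun v => (M : ℂ) * ψ v) (ξ / M) = M * 𝓕 (ψ : ℝ → ℂ) (ξ / M) := by
      simp only [Real.fourier_real_eq_integral_exp_smul, smul_eq_mul]
      rw [← integral_const_mul]
      congr 1; ext; ring
    rw [this]
    have : 𝓕 (ψ : ℝ → ℂ) (ξ / M) = 0 := by
      by_contra hc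
      have h1 := hψ2 (subset_tsupport _ hc)
      rw [Set.mem_Icc, ← abs_le, abs_div, abs_of_pos hM0, div_le_iff₀ hM0] at h1
      linarith
    rw [this]; simp
  set G : ℝ → ℂ := fun y => f (x - y) * u y with hG
  have hGp : PolyGr G := polyGr_mul hp u x
  have hGb : Band (R + 2 * M) G := band_mul hb u huF x
  have hGi : Integrable G := integrable_mul hp u x
  have hfx : f x = ∫ y, G y := by
    rw [reproduce hR hp hb ψ hψ1 M hRM x]
    simp [hG, hu]
  set A : ℝ≥0∞ := ∫⁻ y, ‖G y‖ₑ with hA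
  have hAtop : A ≠ ∞ := hGi.2.ne
  have hfA : ‖f x‖ₑ ≤ A := by rw [hfx]; exact enorm_integral_le_lintegral_enorm _
  set D : ℝ≥0∞ := ENNReal.ofReal (4 * M * B) with hD
  have hGz : ∀ z, ‖G z‖ₑ ≤ D * A := by
    intro z
    rw [reproduce (by positivity) hGp hGb ψ hψ1 (4 * M) (by linarith) z]
    refine (enorm_integral_le_lintegral_enorm _).trans ?_
    have : A = ∫⁻ y, ‖G (z - y)‖ₑ := (lintegral_sub_left_eq_self (fun y => ‖G y‖ₑ) z).symm
    rw [this, ← lintegral_const_mul' _ _ ENNReal.ofReal_ne_top]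
    refine lintegral_mono fun y => ?_
    rw [enorm_mul, mul_comm]
    gcongr
    rw [← ofReal_norm]
    apply ENNReal.ofReal_le_ofReal
    rw [norm_mul, Complex.norm_real, Real.norm_of_nonneg (by positivity)]
    gcongr
    exact hBb _
  have hr1' : 0 ≤ 1 - r := by linarith
  set I : ℝ≥0∞ := ∫⁻ y, ‖G y‖ₑ ^ r with hI
  have hAI : A ≤ (D * A) ^ (1 - r) * I := by
    have hne : (D * A) ^ (1 - r) ≠ ∞ :=
      ENNReal.rpow_ne_top_of_nonneg hr1' (ENNReal.mul_ne_top ENNReal.ofReal_ne_top hAtop)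
    rw [hI, ← lintegral_const_mul' _ _ hne]
    refine lintegral_mono fun y => ?_
    have : ‖G y‖ₑ = ‖G y‖ₑ ^ (1 - r) * ‖G y‖ₑ ^ r := by
      rw [← ENNReal.rpow_add_of_nonneg _ _ hr1' hr0.le]; simp
    calc ‖G y‖ₑ = ‖G y‖ₑ ^ (1 - r) * ‖G y‖ₑ ^ r := this
      _ ≤ _ := by gcongr; exact hGz y
  have hAr : A ^ r ≤ D ^ (1 - r) * I := by
    by_cases hA0 : A = 0
    · rw [hA0, ENNReal.zero_rpow_of_pos hr0]; simp
    have h1 : A ^ (1 - r) ≠ 0 := by simp [hA0, hAtop]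
    have h2 : A ^ (1 - r) ≠ ∞ := ENNReal.rpow_ne_top_of_nonneg hr1' hAtop
    rw [← ENNReal.mul_le_mul_iff_right h1 h2]
    calc A ^ (1 - r) * A ^ r = A := by
          rw [← ENNReal.rpow_add_of_nonneg _ _ hr1' hr0.le]; simp
      _ ≤ _ := hAI
      _ = _ := by rw [ENNReal.mul_rpow_of_nonneg _ _ hr1']; ring
  calc (‖f x‖₊ : ℝ≥0∞) ^ r ≤ A ^ r := by
        gcongr; exact hfA
    _ ≤ D ^ (1 - r) * I := hAr
    _ ≤ _ := by
      rw [hI, ← lintegral_const_mul' _ _ (ENNReal.rpow_ne_top_of_nonneg hr1' ENNReal.ofReal_ne_top),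
        ← lintegral_const_mul' _ _ ENNReal.ofReal_ne_top]
      refine lintegral_mono fun y => ?_
      have e1 : ‖G y‖ₑ ^ r = (‖f (x - y)‖₊ : ℝ≥0∞) ^ r * ENNReal.ofReal ((M * ‖ψ (M * y)‖) ^ r) := by
        simp only [hG]
        rw [enorm_mul, ENNReal.mul_rpow_of_nonneg _ _ hr0.le, hu,
          ← ENNReal.ofReal_rpow_of_nonneg (by positivity) hr0.le, ← ofReal_norm (M * _ : ℂ),
          norm_mul, Complex.norm_real, Real.norm_of_nonneg hM0.le]
        rfl
      rw [e1, ENNReal.ofReal_rpow_of_nonneg (by positivity) hr1', mul_left_comm,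
        mul_left_comm (ENNReal.ofReal (max 1 (4 * B))),
        ← ENNReal.ofReal_mul (by positivity), ← ENNReal.ofReal_mul (by positivity)]
      refine mul_le_mul_right (ENNReal.ofReal_le_ofReal ?_) _
      have e2 : (4 * M * B) ^ (1 - r) = (4 * B) ^ (1 - r) * M ^ (1 - r) := by
        rw [← Real.mul_rpow (by positivity) hM0.le]; ring_nf
      have e3 : M ^ (1 - r) * M ^ r = M := by
        rw [← Real.rpow_add hM0]; simp
      have e4 : (4 * B) ^ (1 - r) ≤ max 1 (4 * B) := by
        calc (4 * B) ^ (1 - r) ≤ (max 1 (4 * B)) ^ (1 - r) :=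
              Real.rpow_le_rpow (by positivity) (le_max_right _ _) hr1'
          _ ≤ (max 1 (4 * B)) ^ (1 : ℝ) :=
              Real.rpow_le_rpow_of_exponent_le (le_max_left _ _) (by linarith)
          _ = _ := Real.rpow_one _
      rw [e2, Real.mul_rpow hM0.le (norm_nonneg _)]
      calc (4 * B) ^ (1 - r) * M ^ (1 - r) * (M ^ r * ‖ψ (M * y)‖ ^ r)
          = (4 * B) ^ (1 - r) * (M ^ (1 - r) * M ^ r * ‖ψ (M * y)‖ ^ r) := by ring
        _ = (4 * B) ^ (1 - r) * (M * ‖ψ (M * y)‖ ^ r) := by rw [e3]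
        _ ≤ _ := by gcongr
end

section
/- Let ψ be a Schwartz function on ℝ and let 1≤s≤∞. There exists a constant C>0, depending only on ψ and s, such that for every M≥1 one has ∑_{k∈ℤ} ( ∫_{−M/2}^{M/2} |ψ(x+Mk)|^s dx )^{1/s} ≤ ‖ψ‖_{L^s(ℝ)} + C. Consequently, with ψ_M(x)=Mψ(Mx), one has ∑_{k∈ℤ} ‖T_{−k}ψ_M‖_{L^s([−1/2,1/2])} ≤ C' M^{1−1/s} for a constant C' depending only on ψ and s. -/
open MeasureTheory Complex SchwartzMap Filter
open scoped FourierTransform ENNReal NNReal Real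

lemma aux_term (ψ : 𝓢(ℝ, ℂ)) (s : ℝ≥0∞) (hs : 1 ≤ s) (A : ℝ) (hA0 : 0 ≤ A)
    (hA : ∀ x : ℝ, ‖x‖ ^ 2 * ‖ψ x‖ ≤ A) (M : ℝ) (hM : 1 ≤ M) (k : ℤ) (hk : k ≠ 0) :
    eLpNorm (fun x : ℝ => ψ (x + M * k)) s (volume.restrict (Set.Icc (-(M/2)) (M/2)))
      ≤ ENNReal.ofReal (4 * A * (1 / (k : ℝ) ^ 2)) := by
  have hM0 : 0 < M := by linarith
  have hkR : (1 : ℝ) ≤ |(k : ℝ)| := by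
    rw [← Int.cast_abs]; exact_mod_cast Int.one_le_abs hk
  have hk2 : 0 < (k : ℝ) ^ 2 := by
    rw [← sq_abs]; positivity
  have hb : ∀ᵐ x ∂(volume.restrict (Set.Icc (-(M/2)) (M/2))),
      ‖ψ (x + M * k)‖ ≤ 4 * A * (1 / (k : ℝ) ^ 2) / M := by
    refine (ae_restrict_iff' measurableSet_Icc).2 (ae_of_all _ fun x hx => ?_)
    have hx1 : |x| ≤ M / 2 := abs_le.2 ⟨hx.1, hx.2⟩
    have h1 : M * |(k : ℝ)| / 2 ≤ |x + M * k| := by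
      have h2 : |M * (k : ℝ)| ≤ |x + M * k| + |x| := by
        have := abs_sub (x + M * k) x
        simpa using this
      rw [abs_mul, abs_of_pos hM0] at h2
      nlinarith
    have h3 : M ^ 2 * (k : ℝ) ^ 2 / 4 ≤ |x + M * k| ^ 2 := by
      have := pow_le_pow_left₀ (by positivity) h1 2
      rw [div_pow, mul_pow, sq_abs (k : ℝ)] at this
      linarith
    have h4 := hA (x + M * k)
    rw [Real.norm_eq_abs] at h4
    have h5 : M ^ 2 * (k : ℝ) ^ 2 / 4 * ‖ψ (x + M * k)‖ ≤ A :=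
      (mul_le_mul_of_nonneg_right h3 (norm_nonneg _)).trans h4
    have h6 : M * (k : ℝ) ^ 2 / 4 * ‖ψ (x + M * k)‖ ≤ A := by
      refine le_trans ?_ h5
      gcongr
      nlinarith
    rw [le_div_iff₀ hM0, mul_one_div, le_div_iff₀ hk2]
    linarith
  refine (eLpNorm_le_of_ae_bound hb).trans ?_
  have hvol : (volume.restrict (Set.Icc (-(M/2)) (M/2))) Set.univ = ENNReal.ofReal M := by
    rw [Measure.restrict_apply_univ, Real.volume_Icc]; congr 1; ring
  rw [hvol]
  have hpow : ENNReal.ofReal M ^ (s.toReal⁻¹) ≤ ENNReal.ofReal M := by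
    conv_rhs => rw [← ENNReal.rpow_one (ENNReal.ofReal M)]
    refine ENNReal.rpow_le_rpow_of_exponent_le (by simpa using hM) ?_
    rcases eq_or_ne s ∞ with h | h
    · simp [h]
    · refine inv_le_one_of_one_le₀ ?_
      simpa using ENNReal.toReal_mono h hs
  refine (mul_le_mul_left hpow _).trans ?_
  rw [← ENNReal.ofReal_mul hM0.le]
  refine ENNReal.ofReal_le_ofReal (le_of_eq ?_)
  field_simp

lemma aux_scale (ψ : 𝓢(ℝ, ℂ)) (s : ℝ≥0∞) (M : ℝ) (hM : 1 ≤ M) (k : ℤ) :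
    eLpNorm (fun x : ℝ => (M : ℂ) * ψ (M * (x + k))) s
          (volume.restrict (Set.Icc (-(1/2) : ℝ) (1/2)))
      = ENNReal.ofReal (M ^ (1 - 1 / s.toReal)) *
        eLpNorm (fun x : ℝ => ψ (x + M * k)) s (volume.restrict (Set.Icc (-(M/2)) (M/2))) := by
  have hM0 : 0 < M := by linarith
  have hemb : MeasurableEmbedding (fun x : ℝ => M * x) :=
    measurableEmbedding_mulLeft₀ hM0.ne'
  have hpre : (fun x : ℝ => M * x) ⁻¹' (Set.Icc (-(M/2)) (M/2)) = Set.Icc (-(1/2) : ℝ) (1/2) := by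
    ext x
    simp only [Set.mem_preimage, Set.mem_Icc]
    constructor
    · rintro ⟨h1, h2⟩
      constructor <;> nlinarith
    · rintro ⟨h1, h2⟩
      constructor <;> nlinarith
  have hmap : Measure.map (fun x : ℝ => M * x) (volume.restrict (Set.Icc (-(1/2) : ℝ) (1/2)))
      = ENNReal.ofReal M⁻¹ • volume.restrict (Set.Icc (-(M/2)) (M/2)) := by
    rw [← hpre, ← hemb.restrict_map, Real.map_volume_mul_left hM0.ne', Measure.restrict_smul,
      abs_of_pos (inv_pos.2 hM0)]
  have h1 : (fun x : ℝ => (M : ℂ) * ψ (M * (x + k)))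
      = (M : ℂ) • ((fun x : ℝ => ψ (x + M * k)) ∘ (fun x : ℝ => M * x)) := by
    ext x
    simp [mul_add]
  rw [h1, eLpNorm_const_smul, ← hemb.eLpNorm_map_measure, hmap,
    eLpNorm_smul_measure_of_ne_zero (by simpa using hM0), smul_eq_mul, ← mul_assoc]
  congr 1
  rw [← ofReal_norm_eq_enorm, ENNReal.ofReal_rpow_of_pos (inv_pos.2 hM0),
    ← ENNReal.ofReal_mul (norm_nonneg _)]
  congr 1
  rw [Complex.norm_real, Real.norm_eq_abs, abs_of_pos hM0, Real.rpow_sub hM0, Real.rpow_one,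
    Real.inv_rpow hM0.le]
  simp [div_eq_mul_inv]

/-- Summability of the translated local `L^s` norms of a dilated Schwartz function. -/
theorem stmt5 (ψ : 𝓢(ℝ, ℂ)) (s : ℝ≥0∞) (hs : 1 ≤ s) :
    (∃ C : ℝ, 0 < C ∧ ∀ M : ℝ, 1 ≤ M →
      ∑' k : ℤ, eLpNorm (fun x : ℝ => ψ (x + M * k)) s
          (volume.restrict (Set.Icc (-(M/2)) (M/2)))
        ≤ eLpNorm (fun x : ℝ => ψ x) s volume + ENNReal.ofReal C) ∧
    ∃ C' : ℝ, 0 < C' ∧ ∀ M : ℝ, 1 ≤ M →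
      ∑' k : ℤ, eLpNorm (fun x : ℝ => (M : ℂ) * ψ (M * (x + k))) s
          (volume.restrict (Set.Icc (-(1/2) : ℝ) (1/2)))
        ≤ ENNReal.ofReal (C' * M ^ (1 - 1 / s.toReal)) := by
  obtain ⟨A, hA0, hA'⟩ := ψ.decay 2 0
  have hA : ∀ x : ℝ, ‖x‖ ^ 2 * ‖ψ x‖ ≤ A := fun x => by simpa using hA' x
  have hsum : Summable fun k : ℤ => 4 * A * (1 / (k : ℝ) ^ 2) :=
    (Real.summable_one_div_int_pow.2 (by norm_num)).mul_left _
  have hnn : ∀ k : ℤ, 0 ≤ 4 * A * (1 / (k : ℝ) ^ 2) := fun k => by positivity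
  have hmain : ∃ C : ℝ, 0 < C ∧ ∀ M : ℝ, 1 ≤ M →
      ∑' k : ℤ, eLpNorm (fun x : ℝ => ψ (x + M * k)) s
          (volume.restrict (Set.Icc (-(M/2)) (M/2)))
        ≤ eLpNorm (fun x : ℝ => ψ x) s volume + ENNReal.ofReal C := by
    refine ⟨(∑' k : ℤ, 4 * A * (1 / (k : ℝ) ^ 2)) + 1,
      by
        have h : 0 ≤ ∑' k : ℤ, 4 * A * (1 / (k : ℝ) ^ 2) := tsum_nonneg hnn
        linarith, fun M hM => ?_⟩
    have hk : ∀ k : ℤ, eLpNorm (fun x : ℝ => ψ (x + M * k)) s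
          (volume.restrict (Set.Icc (-(M/2)) (M/2))) ≤
        (if k = 0 then eLpNorm (fun x : ℝ => ψ x) s volume else 0) +
          ENNReal.ofReal (4 * A * (1 / (k : ℝ) ^ 2)) := by
      intro k
      by_cases h : k = 0
      · subst h
        simpa using eLpNorm_mono_measure (fun x : ℝ => ψ x) Measure.restrict_le_self
      · rw [if_neg h, zero_add]
        exact aux_term ψ s hs A hA0.le hA M hM k h
    refine (ENNReal.tsum_le_tsum hk).trans ?_
    rw [ENNReal.tsum_add, tsum_ite_eq, ← ENNReal.ofReal_tsum_of_nonneg hnn hsum]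
    gcongr
    linarith
  refine ⟨hmain, ?_⟩
  obtain ⟨C, hC, hM'⟩ := hmain
  have hfin : eLpNorm (fun x : ℝ => ψ x) s volume ≠ ∞ := (ψ.eLpNorm_lt_top s volume).ne
  refine ⟨(eLpNorm (fun x : ℝ => ψ x) s volume).toReal + C, by positivity, fun M hM => ?_⟩
  simp_rw [aux_scale ψ s M hM]
  rw [ENNReal.tsum_mul_left, mul_comm _ (M ^ _), ENNReal.ofReal_mul (by positivity),
    ENNReal.ofReal_add ENNReal.toReal_nonneg hC.le, ENNReal.ofReal_toReal hfin]
  exact mul_le_mul_right (hM' M hM) _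
end

section
/- Let m:ℝ²→ℂ be measurable and locally bounded, and let f,g be Schwartz functions on ℝ whose Fourier transforms have compact support. Then C_m(f,g) is a bounded continuous function on ℝ, and its Fourier transform, taken in the sense of tempered distributions, is the compactly supported integrable function ν ↦ ∫_ℝ f̂(ξ) ĝ(ν−ξ) m(ξ,ν−ξ) dξ. -/
open MeasureTheory Complex SchwartzMap Filter
open scoped FourierTransform ENNReal NNReal Real

theorem integrable_symbol (m : ℝ × ℝ → ℂ) (hm : Measurable m) (hloc : LocallyBounded m)
    (F G : ℝ → ℂ) (hFc : Continuous F) (hGc : Continuous G)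
    (hF : HasCompactSupport F) (hG : HasCompactSupport G) :
    Integrable (fun z : ℝ × ℝ => F z.1 * G z.2 * m z) (volume.prod volume) := by
  have hK : IsCompact (tsupport F ×ˢ tsupport G) := IsCompact.prod hF hG
  obtain ⟨C, hC⟩ := hloc _ hK
  have hFG : Integrable (fun z : ℝ × ℝ => F z.1 * G z.2) (volume.prod volume) :=
    (hFc.integrable_of_hasCompactSupport hF).mul_prod (hGc.integrable_of_hasCompactSupport hG)
  refine (hFG.norm.const_mul C).mono'
    (hFG.aestronglyMeasurable.mul hm.aestronglyMeasurable) (ae_of_all _ ?_)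
  intro z
  by_cases h1 : F z.1 = 0
  · simp [h1]
  by_cases h2 : G z.2 = 0
  · simp [h2]
  have := hC z ⟨subset_tsupport _ h1, subset_tsupport _ h2⟩
  rw [norm_mul, mul_comm]
  exact mul_le_mul_of_nonneg_right this (norm_nonneg _)

theorem fourierInv_continuous_of_integrable (h : ℝ → ℂ) (hh : Integrable h) :
    Continuous (𝓕⁻ h) :=
  VectorFourier.fourierIntegral_continuous (L := -innerₗ ℝ) Real.continuous_fourierChar
    (by simp; fun_prop) hh

theorem fourierInv_bounded (h : ℝ → ℂ) (x : ℝ) : ‖𝓕⁻ h x‖ ≤ ∫ v, ‖h v‖ :=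
  VectorFourier.norm_fourierIntegral_le_integral_norm 𝐞 volume (-innerₗ ℝ) h x

theorem integral_fourierInv_mul_fourier (h : ℝ → ℂ) (hh : Integrable h) (φ : 𝓢(ℝ, ℂ)) :
    ∫ x : ℝ, 𝓕⁻ h x * 𝓕 (φ : ℝ → ℂ) x = ∫ ν : ℝ, h ν * φ ν := by
  have key := VectorFourier.integral_fourierIntegral_smul_eq_flip (μ := volume) (ν := volume)
    (L := -innerₗ ℝ) (f := h) (g := 𝓕 (φ : ℝ → ℂ)) Real.continuous_fourierChar
    (by simp; fun_prop) hh (𝓕 φ).integrable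
  have hfl : (-innerₗ ℝ : ℝ →ₗ[ℝ] ℝ →ₗ[ℝ] ℝ).flip = -innerₗ ℝ := by
    ext; simp
  rw [hfl] at key
  have hinv : 𝓕⁻ (𝓕 (φ : ℝ → ℂ)) = φ :=
    φ.continuous.fourierInv_fourier_eq φ.integrable (𝓕 φ).integrable
  have : VectorFourier.fourierIntegral 𝐞 volume (-innerₗ ℝ) (𝓕 (φ : ℝ → ℂ)) = φ := hinv
  rw [this] at key
  exact key

theorem Cm_eq_fourierInv (m : ℝ × ℝ → ℂ) (f g : 𝓢(ℝ, ℂ))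
    (hG : Integrable (fun z : ℝ × ℝ =>
      𝓕 (f : ℝ → ℂ) z.1 * 𝓕 (g : ℝ → ℂ) (z.2 - z.1) * m (z.1, z.2 - z.1))
      (volume.prod volume)) :
    Cm m f g = 𝓕⁻ (fun ν : ℝ =>
      ∫ ξ : ℝ, 𝓕 (f : ℝ → ℂ) ξ * 𝓕 (g : ℝ → ℂ) (ν - ξ) * m (ξ, ν - ξ)) := by
  funext x
  have h1 : Cm m f g x = ∫ ξ : ℝ, ∫ ν : ℝ,
      Complex.exp (2 * Real.pi * Complex.I * (x : ℂ) * (ν : ℂ)) *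
      (𝓕 (f : ℝ → ℂ) ξ * 𝓕 (g : ℝ → ℂ) (ν - ξ) * m (ξ, ν - ξ)) := by
    unfold Cm
    congr 1
    funext ξ
    rw [← integral_sub_right_eq_self _ ξ]
    congr 1
    funext ν
    rw [mul_comm (Complex.exp _)]
    congr 3
    push_cast
    ring
  rw [h1, integral_integral_swap, Real.fourierInv_eq']
  · congr 1
    funext ν
    rw [integral_const_mul, smul_eq_mul]
    congr 2
    simp
    ring
  · refine hG.bdd_mul (c := 1) ?_ (ae_of_all _ ?_)
    · exact Continuous.aestronglyMeasurable (by fun_prop)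
    · intro z
      have : (2 * Real.pi * Complex.I * (x : ℂ) * (z.2 : ℂ)) =
        ((2 * Real.pi * x * z.2 : ℝ) : ℂ) * Complex.I := by push_cast; ring
      rw [this, Complex.norm_exp_ofReal_mul_I]

/-- `C_m(f,g)` is a bounded continuous function whose distributional Fourier transform is the
compactly supported integrable function `ν ↦ ∫ f̂(ξ) ĝ(ν−ξ) m(ξ, ν−ξ) dξ`. -/
theorem stmt11 (m : ℝ × ℝ → ℂ) (hm : Measurable m) (hloc : LocallyBounded m)
    (f g : 𝓢(ℝ, ℂ)) (hf : HasCompactSupport (𝓕 (f : ℝ → ℂ)))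
    (hg : HasCompactSupport (𝓕 (g : ℝ → ℂ))) :
    Continuous (Cm m f g) ∧
    (∃ C : ℝ, ∀ x : ℝ, ‖Cm m f g x‖ ≤ C) ∧
    HasCompactSupport
      (fun ν : ℝ => ∫ ξ : ℝ, 𝓕 (f : ℝ → ℂ) ξ * 𝓕 (g : ℝ → ℂ) (ν - ξ) * m (ξ, ν - ξ)) ∧
    Integrable
      (fun ν : ℝ => ∫ ξ : ℝ, 𝓕 (f : ℝ → ℂ) ξ * 𝓕 (g : ℝ → ℂ) (ν - ξ) * m (ξ, ν - ξ)) ∧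
    ∀ φ : 𝓢(ℝ, ℂ),
      ∫ x : ℝ, Cm m f g x * 𝓕 (φ : ℝ → ℂ) x =
        ∫ ν : ℝ, (∫ ξ : ℝ, 𝓕 (f : ℝ → ℂ) ξ * 𝓕 (g : ℝ → ℂ) (ν - ξ) * m (ξ, ν - ξ)) * φ ν := by
  have hF := integrable_symbol m hm hloc _ _ (𝓕 f).continuous (𝓕 g).continuous hf hg
  have hG : Integrable (fun z : ℝ × ℝ =>
      𝓕 (f : ℝ → ℂ) z.1 * 𝓕 (g : ℝ → ℂ) (z.2 - z.1) * m (z.1, z.2 - z.1))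
      (volume.prod volume) := by
    have hp := measurePreserving_prod_neg_add (volume : Measure ℝ) (volume : Measure ℝ)
    have := hp.integrable_comp_of_integrable hF
    refine this.congr (ae_of_all _ fun z => ?_)
    simp [neg_add_eq_sub]
  have hh : Integrable (fun ν : ℝ =>
      ∫ ξ : ℝ, 𝓕 (f : ℝ → ℂ) ξ * 𝓕 (g : ℝ → ℂ) (ν - ξ) * m (ξ, ν - ξ)) :=
    hG.integral_prod_right
  rw [Cm_eq_fourierInv m f g hG]
  refine ⟨fourierInv_continuous_of_integrable _ hh, ⟨_, fourierInv_bounded _⟩, ?_, hh,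
    integral_fourierInv_mul_fourier _ hh⟩
  open scoped Pointwise in
  refine HasCompactSupport.intro (K := tsupport (𝓕 (f : ℝ → ℂ)) + tsupport (𝓕 (g : ℝ → ℂ)))
    (IsCompact.add hf hg) ?_
  intro ν hν
  refine integral_eq_zero_of_ae (ae_of_all _ fun ξ => ?_)
  by_cases h1 : 𝓕 (f : ℝ → ℂ) ξ = 0
  · simp [h1]
  by_cases h2 : 𝓕 (g : ℝ → ℂ) (ν - ξ) = 0
  · simp [h2]
  exact absurd ⟨ξ, subset_tsupport _ h1, ν - ξ, subset_tsupport _ h2, by simp⟩ hν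
end

section
/- Let m:ℝ²→ℂ be measurable and locally bounded, let k be a positive integer, and let f,g be Schwartz functions on ℝ with supp f̂ ⊂ [−k/2,k/2] and supp ĝ ⊂ [−k/2,k/2]. Fix u∈[−1/2,1/2] and define the absolutely summable sequences a(n)=f(k^{−1}(n+u)) and b(n)=g(k^{−1}(n+u)) for n∈ℤ, with associated absolutely convergent Fourier series P(ξ)=∑_{j∈ℤ} a(j)e^{−2πijξ} and Q(η)=∑_{j∈ℤ} b(j)e^{−2πijη}. Then for every n∈ℤ, C_m(f,g)(k^{−1}(n+u)) = ∫_{−1/2}^{1/2}∫_{−1/2}^{1/2} P(ξ)Q(η) m(kξ,kη) e^{2πin(ξ+η)} dξdη. Moreover P(ξ)=k f̂(kξ)e^{2πiuξ} for almost every ξ∈[−1/2,1/2], and likewise for Q. -/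
open MeasureTheory Complex SchwartzMap Filter
open scoped FourierTransform ENNReal NNReal Real

lemma aux_summable (f : 𝓢(ℝ, ℂ)) (k : ℕ) (hk : 0 < k) (u : ℝ) :
    Summable (fun n : ℤ => ‖f (((n : ℝ) + u) / k)‖) := by
  have hk' : (0 : ℝ) < k := by exact_mod_cast hk
  have h1 : Tendsto (fun n : ℤ => ((n : ℝ) + u) / k) cofinite (cocompact ℝ) := by
    have e : Topology.IsClosedEmbedding (fun x : ℝ => (x + u) / k) :=
      ((Homeomorph.addRight u).trans (Homeomorph.mulRight₀ ((k:ℝ)⁻¹) (by positivity))).isClosedEmbedding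
    exact e.tendsto_cocompact.comp Int.tendsto_coe_cofinite
  have h2 := ((f.isBigO_cocompact_rpow (-2)).comp_tendsto h1).norm_left
  refine summable_of_isBigO ?_ h2
  have h3 := ((Real.summable_one_div_int_add_rpow u 2).2 one_lt_two).mul_left ((k : ℝ) ^ (2:ℝ))
  refine h3.congr fun n => ?_
  simp only [Function.comp_apply, Real.norm_eq_abs]
  rw [abs_div, abs_of_pos hk', Real.rpow_neg (by positivity), Real.div_rpow (by positivity) hk'.le]
  field_simp

lemma aux_supp (f : 𝓢(ℝ, ℂ)) (k : ℕ)
    (hf : tsupport (𝓕 (f : ℝ → ℂ)) ⊆ Set.Icc (-((k : ℝ)/2)) ((k : ℝ)/2)) (ξ : ℝ)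
    (h : 𝓕 (f : ℝ → ℂ) ξ ≠ 0) : -((k : ℝ)/2) < ξ ∧ ξ < (k : ℝ)/2 := by
  have hc : Continuous (𝓕 (f : ℝ → ℂ)) := by
    rw [← SchwartzMap.fourier_coe]; exact (𝓕 f).continuous
  have ho : IsOpen (Function.support (𝓕 (f : ℝ → ℂ))) := hc.isOpen_support
  have := interior_maximal ((subset_tsupport _).trans hf) ho h
  rwa [interior_Icc] at this

lemma aux_G (f : 𝓢(ℝ, ℂ)) (k : ℕ) (hk : 0 < k)
    (hf : tsupport (𝓕 (f : ℝ → ℂ)) ⊆ Set.Icc (-((k : ℝ)/2)) ((k : ℝ)/2)) (u x : ℝ)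
    (hx : x ∈ Set.Icc (-(1/2) : ℝ) (1/2)) :
    (∑' j : ℤ, f (((j : ℝ) + u) / k) *
          Complex.exp (-(2 * Real.pi) * Complex.I * (j : ℂ) * (x : ℂ))) =
        (k : ℂ) * 𝓕 (f : ℝ → ℂ) ((k : ℝ) * x) *
          Complex.exp (2 * Real.pi * Complex.I * (u : ℂ) * (x : ℂ)) := by
  have hk' : (0 : ℝ) < k := by exact_mod_cast hk
  have hkc : (k : ℂ) ≠ 0 := by exact_mod_cast hk.ne'
  have hc : Continuous (𝓕 (f : ℝ → ℂ)) := by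
    rw [← SchwartzMap.fourier_coe]; exact (𝓕 f).continuous
  set G : ℝ → ℂ := fun x => (k : ℂ) * 𝓕 (f : ℝ → ℂ) ((k : ℝ) * x) *
          Complex.exp (2 * Real.pi * Complex.I * (u : ℂ) * (x : ℂ)) with hG
  have hGc : Continuous G := by rw [hG]; fun_prop
  have hG0 : ∀ y : ℝ, ¬ (-(1/2) < y ∧ y < 1/2) → G y = 0 := by
    intro y hy
    have : 𝓕 (f : ℝ → ℂ) ((k : ℝ) * y) = 0 := by
      by_contra h
      obtain ⟨h1, h2⟩ := aux_supp f k hf _ h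
      exact hy ⟨by nlinarith, by nlinarith⟩
    simp [hG, this]
  have hFG : ∀ n : ℤ, 𝓕 G n = f ((((-n : ℤ) : ℝ) + u) / k) := by
    intro n
    have hinv : 𝓕⁻ (𝓕 (f : ℝ → ℂ)) = f := by
      rw [← SchwartzMap.fourier_coe, ← SchwartzMap.fourierInv_coe, FourierTransform.fourierInv_fourier_eq]
    conv_rhs => rw [← hinv]
    rw [Real.fourier_real_eq_integral_exp_smul, Real.fourierInv_eq']
    set H : ℝ → ℂ := fun v => Complex.exp (↑(2 * π * inner ℝ v ((((-n : ℤ) : ℝ) + u) / k)) * I) •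
      𝓕 (f : ℝ → ℂ) v with hH
    have h1 := Measure.integral_comp_mul_left H (k : ℝ)
    have h2 : ∫ v, H v = (k : ℝ) • ∫ x, H (k * x) := by
      rw [h1, abs_of_pos (by positivity), smul_smul, mul_inv_cancel₀ hk'.ne', one_smul]
    rw [h2, ← integral_smul]
    congr 1
    ext v
    simp only [hG, hH, smul_eq_mul, real_smul]
    have : Complex.exp (↑(-2 * π * v * (n:ℝ)) * I) * Complex.exp (2 * Real.pi * Complex.I * (u : ℂ) * (v : ℂ))
      = Complex.exp (↑(2 * π * inner ℝ ((k:ℝ) * v) ((((-n : ℤ) : ℝ) + u) / k)) * I) := by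
      rw [← Complex.exp_add]
      congr 1
      simp
      field_simp
    rw [← this]
    push_cast
    ring
  have hO : G =O[cocompact ℝ] fun x : ℝ => |x| ^ (-2 : ℝ) := by
    have : G =ᶠ[cocompact ℝ] fun _ => 0 := by
      filter_upwards [(isCompact_Icc (a := (-(1/2) : ℝ)) (b := 1/2)).compl_mem_cocompact] with y hy
      exact hG0 y fun h => hy ⟨h.1.le, h.2.le⟩
    exact this.trans_isBigO (Asymptotics.isBigO_zero _ _)
  have hS : Summable fun n : ℤ => 𝓕 G n := by
    have := (aux_summable f k hk u).of_norm
    refine ((Equiv.neg ℤ).summable_iff.2 this).congr fun n => ?_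
    rw [hFG]; rfl
  have P := Real.tsum_eq_tsum_fourier_of_rpow_decay_of_summable hGc one_lt_two hO hS x
  rw [tsum_eq_single 0] at P
  · have : G x = G (x + (0:ℤ)) := by simp
    change _ = G x
    rw [this, P, ← (Equiv.neg ℤ).tsum_eq]
    refine tsum_congr fun n => ?_
    rw [hFG, fourier_coe_apply]
    simp only [Equiv.neg_apply]
    congr 2
    push_cast
    ring
  · intro n hn
    refine hG0 _ fun h => hn ?_
    obtain ⟨h1, h2⟩ := h
    obtain ⟨h3, h4⟩ := hx
    have a1 : (n : ℝ) < 1 := by linarith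
    have a2 : (-1 : ℝ) < n := by linarith
    have b1 : n < 1 := by exact_mod_cast a1
    have b2 : -1 < n := by exact_mod_cast a2
    omega

/-- Sampling relation: for `f,g` Schwartz with `supp f̂, supp ĝ ⊆ [−k/2,k/2]` and
`u ∈ [−1/2,1/2]`, the samples `a(n) = f((n+u)/k)`, `b(n) = g((n+u)/k)` are absolutely summable,
`C_m(f,g)((n+u)/k)` is given by the discrete bilinear integral of the associated Fourier series
`P, Q`, and `P(ξ) = k f̂(kξ) e^{2πiuξ}` a.e. on `[−1/2,1/2]` (likewise for `Q`). -/
theorem stmt14 (m : ℝ × ℝ → ℂ) (hm : Measurable m) (hloc : LocallyBounded m)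
    (k : ℕ) (hk : 0 < k) (f g : 𝓢(ℝ, ℂ))
    (hf : tsupport (𝓕 (f : ℝ → ℂ)) ⊆ Set.Icc (-((k : ℝ)/2)) ((k : ℝ)/2))
    (hg : tsupport (𝓕 (g : ℝ → ℂ)) ⊆ Set.Icc (-((k : ℝ)/2)) ((k : ℝ)/2))
    (u : ℝ) (hu : u ∈ Set.Icc (-(1/2) : ℝ) (1/2)) :
    Summable (fun n : ℤ => ‖f (((n : ℝ) + u) / k)‖) ∧
    Summable (fun n : ℤ => ‖g (((n : ℝ) + u) / k)‖) ∧
    (∀ n : ℤ,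
      Cm m f g (((n : ℝ) + u) / k) =
        ∫ ξ in Set.Icc (-(1/2) : ℝ) (1/2), ∫ η in Set.Icc (-(1/2) : ℝ) (1/2),
          (∑' j : ℤ, f (((j : ℝ) + u) / k) *
              Complex.exp (-(2 * Real.pi) * Complex.I * (j : ℂ) * (ξ : ℂ))) *
            (∑' j : ℤ, g (((j : ℝ) + u) / k) *
              Complex.exp (-(2 * Real.pi) * Complex.I * (j : ℂ) * (η : ℂ))) *
            m ((k : ℝ) * ξ, (k : ℝ) * η) *
            Complex.exp (2 * Real.pi * Complex.I * (n : ℂ) * ((ξ : ℂ) + (η : ℂ)))) ∧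
    (∀ᵐ (ξ : ℝ) ∂(volume.restrict (Set.Icc (-(1/2) : ℝ) (1/2))),
      (∑' j : ℤ, f (((j : ℝ) + u) / k) *
          Complex.exp (-(2 * Real.pi) * Complex.I * (j : ℂ) * (ξ : ℂ))) =
        (k : ℂ) * 𝓕 (f : ℝ → ℂ) ((k : ℝ) * ξ) *
          Complex.exp (2 * Real.pi * Complex.I * (u : ℂ) * (ξ : ℂ))) ∧
    ∀ᵐ (η : ℝ) ∂(volume.restrict (Set.Icc (-(1/2) : ℝ) (1/2))),
      (∑' j : ℤ, g (((j : ℝ) + u) / k) *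
          Complex.exp (-(2 * Real.pi) * Complex.I * (j : ℂ) * (η : ℂ))) =
        (k : ℂ) * 𝓕 (g : ℝ → ℂ) ((k : ℝ) * η) *
          Complex.exp (2 * Real.pi * Complex.I * (u : ℂ) * (η : ℂ)) := by
  have hk' : (0 : ℝ) < k := by exact_mod_cast hk
  have hkc : (k : ℂ) ≠ 0 := by exact_mod_cast hk.ne'
  refine ⟨aux_summable f k hk u, aux_summable g k hk u, ?_, ?_, ?_⟩
  · intro n
    have hrw : ∀ (F : ℝ → ℂ), (∀ ξ, ¬ (-((k : ℝ)/2) < ξ ∧ ξ < (k : ℝ)/2) → F ξ = 0) →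
        ∫ ξ, F ξ = ∫ ξ in Set.Icc (-(1/2) : ℝ) (1/2), (k : ℂ) * F (k * ξ) := by
      intro F hF
      have h1 := Measure.integral_comp_mul_left F (k : ℝ)
      have h2 : ∫ v, F v = (k : ℝ) • ∫ x, F (k * x) := by
        rw [h1, abs_of_pos (by positivity), smul_smul, mul_inv_cancel₀ hk'.ne', one_smul]
      rw [h2, integral_const_mul, setIntegral_eq_integral_of_forall_compl_eq_zero]
      · simp
      · intro y hy
        refine hF _ fun h => hy ⟨?_, ?_⟩
        · nlinarith [h.1]
        · nlinarith [h.2]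
    unfold Cm
    rw [hrw]
    · refine setIntegral_congr_fun measurableSet_Icc fun ξ hξ => ?_
      rw [hrw, ← integral_const_mul]
      · refine setIntegral_congr_fun measurableSet_Icc fun η hη => ?_
        rw [aux_G f k hk hf u ξ hξ, aux_G g k hk hg u η hη]
        have : Complex.exp (2 * Real.pi * Complex.I * ((((n : ℝ) + u) / k : ℝ) : ℂ) *
            (((k * ξ : ℝ) : ℂ) + ((k * η : ℝ) : ℂ))) =
            Complex.exp (2 * Real.pi * Complex.I * (u : ℂ) * (ξ : ℂ)) *
            Complex.exp (2 * Real.pi * Complex.I * (u : ℂ) * (η : ℂ)) *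
            Complex.exp (2 * Real.pi * Complex.I * (n : ℂ) * ((ξ : ℂ) + (η : ℂ))) := by
          rw [← Complex.exp_add, ← Complex.exp_add]
          congr 1
          push_cast
          field_simp
          ring
        rw [this]
        ring
      · intro η hη
        have : 𝓕 (g : ℝ → ℂ) η = 0 := by
          by_contra h
          exact hη (aux_supp g k hg _ h)
        simp [this]
    · intro ξ hξ
      have : 𝓕 (f : ℝ → ℂ) ξ = 0 := by
        by_contra h
        exact hξ (aux_supp f k hf _ h)
      simp [this]
  · filter_upwards [ae_restrict_mem measurableSet_Icc] with ξ hξ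
    exact aux_G f k hk hf u ξ hξ
  · filter_upwards [ae_restrict_mem measurableSet_Icc] with ξ hξ
    exact aux_G g k hk hg u ξ hξ
end

section
/- Let α∈ℝ with |α|≤1 and for integers r,s define c_α(r,s)=∫_{−1/2}^{1/2}∫_{−1/2}^{1/2} sign(ξ+αη) e^{2πi(rξ+sη)} dξ dη. Then: (i) for r≠0, c_α(r,s) = −(1/(πir))·( sinc(−αr+s) − (−1)^r·1_{{s=0}} ); (ii) for r=0 and s≠0, c_α(0,s) = −(α/(πis))·( sinc(s) − cos(πs) ); and (iii) c_α(0,0)=0. Here sinc(x)=sin(πx)/(πx) for x≠0 and sinc(0)=1, and 1_{{s=0}} equals 1 if s=0 and 0 otherwise. -/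
open MeasureTheory Complex SchwartzMap Filter
open scoped FourierTransform ENNReal NNReal Real

/-- The Fourier coefficients of `sign(ξ + αη)` on the unit square. -/
noncomputable def cInt (α : ℝ) (r s : ℤ) : ℂ :=
  ∫ ξ in Set.Icc (-(1/2) : ℝ) (1/2), ∫ η in Set.Icc (-(1/2) : ℝ) (1/2),
    ((Real.sign (ξ + α * η) : ℝ) : ℂ) *
      Complex.exp (2 * Real.pi * Complex.I * ((r : ℂ) * (ξ : ℂ) + (s : ℂ) * (η : ℂ)))

lemma aux_meas_sign : Measurable Real.sign := by
  unfold Real.sign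
  exact Measurable.ite measurableSet_Iio measurable_const
    (Measurable.ite measurableSet_Ioi measurable_const measurable_const)

lemma aux_Icc (f : ℝ → ℂ) : ∫ x in Set.Icc (-(1/2) : ℝ) (1/2), f x = ∫ x in (-(1/2):ℝ)..(1/2), f x := by
  rw [intervalIntegral.integral_of_le (by norm_num), integral_Icc_eq_integral_Ioc]

lemma aux_sign (a : ℝ) (h1 : -(1/2) ≤ a) (h2 : a ≤ 1/2) (f : ℝ → ℂ) (hf : Continuous f) :
    ∫ x in (-(1/2):ℝ)..(1/2), ((Real.sign (x - a) : ℝ) : ℂ) * f x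
      = (∫ x in a..(1/2), f x) - ∫ x in (-(1/2):ℝ)..a, f x := by
  have hint : ∀ u v : ℝ, IntervalIntegrable (fun x => ((Real.sign (x - a) : ℝ) : ℂ) * f x) volume u v := by
    intro u v
    refine IntervalIntegrable.mono_fun (hf.intervalIntegrable u v) ?_ ?_
    · refine AEStronglyMeasurable.mul ?_ hf.aestronglyMeasurable
      exact (Complex.measurable_ofReal.comp
        (aux_meas_sign.comp (measurable_id.sub_const a))).aestronglyMeasurable
    · refine Eventually.of_forall fun x => ?_
      rcases Real.sign_apply_eq (x - a) with h | h | h <;> simp [h]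
  rw [← intervalIntegral.integral_add_adjacent_intervals (hint _ a) (hint a _)]
  have e1 : ∫ x in (-(1/2):ℝ)..a, ((Real.sign (x - a) : ℝ) : ℂ) * f x = ∫ x in (-(1/2):ℝ)..a, - f x := by
    rw [intervalIntegral.integral_of_le h1, intervalIntegral.integral_of_le h1,
      integral_Ioc_eq_integral_Ioo, integral_Ioc_eq_integral_Ioo]
    refine setIntegral_congr_fun measurableSet_Ioo fun x hx => ?_
    simp [Real.sign_of_neg (sub_neg.2 hx.2)]
  have e2 : ∫ x in a..(1/2), ((Real.sign (x - a) : ℝ) : ℂ) * f x = ∫ x in a..(1/2), f x := by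
    rw [intervalIntegral.integral_of_le h2, intervalIntegral.integral_of_le h2]
    refine setIntegral_congr_fun measurableSet_Ioc fun x hx => ?_
    simp [Real.sign_of_pos (sub_pos.2 hx.1)]
  rw [e1, e2, intervalIntegral.integral_neg]
  ring

lemma aux_sinc (x : ℝ) : ∫ η in (-(1/2):ℝ)..(1/2), Complex.exp (2 * π * I * x * η) = (mySinc x : ℂ) := by
  unfold mySinc
  split_ifs with h
  · subst h
    simp
    norm_num
  · have hx : (x : ℂ) ≠ 0 := by exact_mod_cast h
    have hp : (π : ℂ) ≠ 0 := by exact_mod_cast Real.pi_ne_zero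
    have hc : 2 * (π : ℂ) * I * x ≠ 0 := by simp [hx, hp]
    rw [integral_exp_mul_complex hc]
    push_cast
    rw [Complex.sin]
    have a1 : 2 * (π : ℂ) * I * x * (1/2) = π * x * I := by ring
    have a2 : 2 * (π : ℂ) * I * x * -(1/2) = -(π * x) * I := by ring
    rw [a1, a2]
    field_simp
    rw [I_sq]; ring

lemma aux_swap (α : ℝ) (r s : ℤ) : cInt α r s =
    ∫ η in (-(1/2):ℝ)..(1/2), (∫ ξ in (-(1/2):ℝ)..(1/2), ((Real.sign (ξ - (-(α * η))) : ℝ) : ℂ) *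
      Complex.exp (2 * π * I * r * ξ)) * Complex.exp (2 * π * I * s * η) := by
  unfold cInt
  rw [integral_integral_swap]
  · rw [aux_Icc]
    refine intervalIntegral.integral_congr fun η _ => ?_
    rw [aux_Icc, ← intervalIntegral.integral_mul_const]
    refine intervalIntegral.integral_congr fun ξ _ => ?_
    rw [sub_neg_eq_add, mul_assoc ((Real.sign _ : ℝ) : ℂ) (cexp _) (cexp _), ← Complex.exp_add]
    congr 2
    ring
  · refine Integrable.of_bound (C := 1) ?_ ?_
    · refine Measurable.aestronglyMeasurable ?_
      refine Measurable.mul ?_ ?_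
      · refine Complex.measurable_ofReal.comp (aux_meas_sign.comp ?_)
        fun_prop
      · fun_prop
    · refine Eventually.of_forall fun p => ?_
      simp only [Function.uncurry]
      have : ‖Complex.exp (2 * Real.pi * Complex.I * ((r : ℂ) * (p.1 : ℂ) + (s : ℂ) * (p.2 : ℂ)))‖ = 1 := by
        have := Complex.norm_exp_ofReal_mul_I (2 * π * (r * p.1 + s * p.2))
        rw [← this]; congr 2; push_cast; ring
      rw [norm_mul, this]
      rcases Real.sign_apply_eq (p.1 + α * p.2) with h | h | h <;> simp [h]

lemma aux_bd (α : ℝ) (hα : |α| ≤ 1) (η : ℝ) (h : η ∈ Set.uIcc (-(1/2):ℝ) (1/2)) :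
    -(1/2) ≤ -(α * η) ∧ -(α * η) ≤ 1/2 := by
  rw [Set.uIcc_of_le (by norm_num)] at h
  have h1 : |η| ≤ 1/2 := abs_le.2 h
  have : |α * η| ≤ 1/2 := by
    rw [abs_mul]
    nlinarith [abs_nonneg α, abs_nonneg η]
  have := abs_le.1 this
  constructor <;> linarith

lemma aux_half (r : ℤ) : Complex.exp (π * I * r) = (-1) ^ r ∧ Complex.exp (-(π * I * r)) = (-1) ^ r := by
  have h : Complex.exp (π * I * r) = (-1) ^ r := by
    rw [mul_comm, Complex.exp_int_mul, Complex.exp_pi_mul_I]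
  refine ⟨h, ?_⟩
  rw [Complex.exp_neg, h, ← inv_zpow]
  norm_num

lemma aux_sinc_int (s : ℤ) : mySinc s = if s = 0 then 1 else 0 := by
  unfold mySinc
  by_cases h : s = 0
  · simp [h]
  · simp [h, mul_comm π, Real.sin_int_mul_pi]

lemma aux_zero (α : ℝ) (hα : |α| ≤ 1) (s : ℤ) : cInt α 0 s =
    ∫ η in (-(1/2):ℝ)..(1/2), 2 * α * (η * Complex.exp (2 * π * I * s * η)) := by
  rw [aux_swap]
  refine intervalIntegral.integral_congr fun η h => ?_
  obtain ⟨h1, h2⟩ := aux_bd α hα η h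
  rw [aux_sign _ h1 h2 _ (by fun_prop)]
  simp
  ring

/-- Computation of the Fourier coefficients `c_α(r,s)` of `sign(ξ + αη)` for `|α| ≤ 1`. -/
theorem stmt15 (α : ℝ) (hα : |α| ≤ 1) :
    (∀ r s : ℤ, r ≠ 0 →
      cInt α r s = -(1 / (Real.pi * Complex.I * (r : ℂ))) *
        ((mySinc (-α * r + s) : ℂ) - (-1 : ℂ) ^ r * (if s = 0 then 1 else 0))) ∧
    (∀ s : ℤ, s ≠ 0 →
      cInt α 0 s = -((α : ℂ) / (Real.pi * Complex.I * (s : ℂ))) *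
        ((mySinc s : ℂ) - Complex.cos (Real.pi * (s : ℂ)))) ∧
    cInt α 0 0 = 0 := by
  have hp : (π : ℂ) ≠ 0 := by exact_mod_cast Real.pi_ne_zero
  refine ⟨fun r s hr => ?_, fun s hs => ?_, ?_⟩
  · have hr' : (r : ℂ) ≠ 0 := by exact_mod_cast hr
    have hc : 2 * (π : ℂ) * I * r ≠ 0 := by simp [hr', hp]
    have hs : (if s = 0 then 1 else 0 : ℂ) = (mySinc (s : ℝ) : ℂ) := by
      rw [aux_sinc_int]; split_ifs <;> simp
    rw [hs, ← aux_sinc, ← aux_sinc, ← intervalIntegral.integral_const_mul,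
      ← intervalIntegral.integral_sub, ← intervalIntegral.integral_const_mul, aux_swap]
    · refine intervalIntegral.integral_congr fun η h => ?_
      obtain ⟨h1, h2⟩ := aux_bd α hα η h
      rw [aux_sign _ h1 h2 _ (by fun_prop), integral_exp_mul_complex hc, integral_exp_mul_complex hc]
      have a1 : 2 * (π : ℂ) * I * r * ((1/2 : ℝ) : ℂ) = π * I * r := by push_cast; ring
      have a2 : 2 * (π : ℂ) * I * r * ((-(1/2) : ℝ) : ℂ) = -(π * I * r) := by push_cast; ring
      rw [a1, a2, (aux_half r).1, (aux_half r).2]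
      have a3 : Complex.exp (2 * π * I * ((-α * r + s : ℝ) : ℂ) * η) =
          Complex.exp (2 * π * I * r * ((-(α * η) : ℝ) : ℂ)) * Complex.exp (2 * π * I * s * η) := by
        rw [← Complex.exp_add]; congr 1; push_cast; ring
      rw [a3]
      push_cast
      field_simp
      ring
    · exact Continuous.intervalIntegrable (by fun_prop) _ _
    · exact Continuous.intervalIntegrable (by fun_prop) _ _
  · have hs' : (s : ℂ) ≠ 0 := by exact_mod_cast hs
    have hc : 2 * (π : ℂ) * I * s ≠ 0 := by simp [hs', hp]
    rw [aux_zero α hα, aux_sinc_int, if_neg hs]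
    obtain ⟨c, hcd⟩ : ∃ c, c = 2 * (π : ℂ) * I * s := ⟨_, rfl⟩
    have hd : ∀ η : ℝ, HasDerivAt (fun x : ℝ => (2 * α : ℂ) * (x * Complex.exp (c * x) / c
        - Complex.exp (c * x) / c ^ 2)) (2 * α * (η * Complex.exp (c * η))) η := by
      intro η
      have h0 : HasDerivAt (fun x : ℝ => (x : ℂ)) 1 η := Complex.ofRealCLM.hasDerivAt
      have he := (h0.const_mul c).cexp
      have := (((h0.mul he).div_const c).sub (he.div_const (c ^ 2))).const_mul (2 * α : ℂ)
      have heq : 2 * (α : ℂ) * (η * Complex.exp (c * η)) =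
          2 * α * ((1 * cexp (c * η) + η * (cexp (c * η) * (c * 1))) / c
            - cexp (c * η) * (c * 1) / c ^ 2) := by
        rw [← hcd] at hc
        field_simp
        ring
      rw [heq]
      exact this
    rw [← hcd] at hc ⊢
    rw [intervalIntegral.integral_eq_sub_of_hasDerivAt (fun η _ => hd η)
      (Continuous.intervalIntegrable (by fun_prop) _ _)]
    have a1 : c * ((1/2 : ℝ) : ℂ) = π * I * s := by rw [hcd]; push_cast; ring
    have a2 : c * ((-(1/2) : ℝ) : ℂ) = -(π * I * s) := by rw [hcd]; push_cast; ring
    have a4 : Complex.cos (π * s) = (-1) ^ s := by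
      rw [Complex.cos, ← (aux_half s).1]
      have b1 : (π : ℂ) * s * I = π * I * s := by ring
      have b2 : -((π : ℂ) * s) * I = -(π * I * s) := by ring
      rw [b1, b2, (aux_half s).1, (aux_half s).2]
      ring
    rw [a1, a2, a4, (aux_half s).1, (aux_half s).2, hcd]
    push_cast
    field_simp
    ring
  · rw [aux_zero α hα]
    simp only [Int.cast_zero, mul_zero, zero_mul, Complex.exp_zero, mul_one]
    rw [intervalIntegral.integral_const_mul, intervalIntegral.integral_ofReal]
    simp
end
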